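/- arXiv:1311.1405 — 3 statements merged into one kernel-verified Lean document; each statement's English description precedes it below -/
import Mathlib

section
/- Let d ≥ 1 and p_j, q_j ∈ [1,∞] for j = 0,1,2. Suppose there is a constant C > 0 such that ‖a#b‖_{ℳ^{p₀′,q₀′}} ≤ C ‖a‖_{ℳ^{p₁,q₁}} ‖b‖_{ℳ^{p₂,q₂}} for all Schwartz functions a, b on ℝ^{2d} (norms taking values in [0,∞]). Then 3 ≤ 1/q₀ + 1/q₁ + 1/q₂ + 1/p₀ + 1/p₁ + 1/p₂. -/
open MeasureTheory Filter
open scoped ENNReal RealInnerProductSpace BigOperators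

noncomputable section

/-- The phase space `ℝ^d × ℝ^d ≃ ℝ^{2d}`. -/
abbrev PhS (d : ℕ) : Type := EuclideanSpace ℝ (Fin d) × EuclideanSpace ℝ (Fin d)

/-- The symplectic form `σ((x,ξ),(y,η)) = ⟨y,ξ⟩ - ⟨x,η⟩`. -/
def symplForm {d : ℕ} (X Y : PhS d) : ℝ := ⟪Y.1, X.2⟫ - ⟪X.1, Y.2⟫

/-- The symplectic Fourier transform `(F_σ a)(X) = π^{-d} ∫ a(Y) e^{2iσ(X,Y)} dY`. -/
def symplFT (d : ℕ) (a : PhS d → ℂ) (X : PhS d) : ℂ :=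
  ((Real.pi : ℂ) ^ d)⁻¹ * ∫ Y : PhS d, a Y * Complex.exp (2 * Complex.I * (symplForm X Y : ℂ))

/-- The twisted convolution
`(a ∗_σ b)(X) = (2/π)^{d/2} ∫ a(X-Y) b(Y) e^{2iσ(X,Y)} dY`. -/
def twistConv (d : ℕ) (a b : PhS d → ℂ) (X : PhS d) : ℂ :=
  (((2 / Real.pi) ^ ((d : ℝ) / 2) : ℝ) : ℂ) *
    ∫ Y : PhS d, a (X - Y) * b Y * Complex.exp (2 * Complex.I * (symplForm X Y : ℂ))

/-- The Weyl product `a # b = (2π)^{-d/2} a ∗_σ (F_σ b)`. -/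
def weylProd (d : ℕ) (a b : PhS d → ℂ) : PhS d → ℂ := fun X =>
  (((2 * Real.pi) ^ (-(d : ℝ) / 2) : ℝ) : ℂ) * twistConv d a (symplFT d b) X

/-- The `N`-fold Weyl product `a₁ # ⋯ # a_N` of a list of symbols. -/
def weylProdList (d : ℕ) : List (PhS d → ℂ) → (PhS d → ℂ)
  | [] => fun _ => 0
  | [a] => a
  | a :: b :: l => weylProd d a (weylProdList d (b :: l))

/-- The symplectic short-time Fourier transform
`𝒱_Φ a (X,Y) = π^{-d} ∫ a(Z) conj(Φ(Z-X)) e^{2iσ(Y,Z)} dZ`. -/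
def symplSTFT (d : ℕ) (Φ a : PhS d → ℂ) (X Y : PhS d) : ℂ :=
  ((Real.pi : ℂ) ^ d)⁻¹ *
    ∫ Z : PhS d, a Z * (starRingEnd ℂ) (Φ (Z - X)) *
      Complex.exp (2 * Complex.I * (symplForm Y Z : ℂ))

/-- The `L^p` norm (with values in `[0,∞]`) of an `ℝ≥0∞`-valued function,
with the convention of an essential supremum when `p = ∞`. -/
def lpNormENN {α : Type*} [MeasurableSpace α] (μ : Measure α) (p : ℝ≥0∞)
    (f : α → ℝ≥0∞) : ℝ≥0∞ :=
  if p = ∞ then essSup f μ else (∫⁻ x, f x ^ p.toReal ∂μ) ^ (1 / p.toReal)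

/-- The modulation space norm `‖a‖_{ℳ^{p,q}_{(ω)}}` with respect to the window `Φ`. -/
def modNorm (d : ℕ) (p q : ℝ≥0∞) (ω : PhS d × PhS d → ℝ) (Φ a : PhS d → ℂ) : ℝ≥0∞ :=
  lpNormENN volume q fun Y =>
    lpNormENN volume p fun X => ENNReal.ofReal (‖symplSTFT d Φ a X Y‖ * ω (X, Y))

/-- The Wiener amalgam space norm `‖a‖_{𝒲^{p,q}_{(ω)}}` with respect to the window `Φ`. -/
def wienerNorm (d : ℕ) (p q : ℝ≥0∞) (ω : PhS d × PhS d → ℝ) (Φ a : PhS d → ℂ) : ℝ≥0∞ :=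
  lpNormENN volume p fun X =>
    lpNormENN volume q fun Y => ENNReal.ofReal (‖symplSTFT d Φ a X Y‖ * ω (X, Y))

/-- Membership in the class `𝒫_E` of positive, locally bounded, moderate weights. -/
def IsModerateWeight {E : Type*} [NormedAddCommGroup E] (ω : E → ℝ) : Prop :=
  (∀ x, 0 < ω x) ∧ (∀ r : ℝ, ∃ M : ℝ, ∀ x, ‖x‖ ≤ r → ω x ≤ M) ∧
    ∃ C c : ℝ, 0 < C ∧ 0 < c ∧ ∀ x y, ω (x + y) ≤ C * ω x * Real.exp (c * ‖y‖)

/-- The real number `1/p ∈ [0,1]` associated to `p ∈ [1,∞]`. -/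
def rcp (p : ℝ≥0∞) : ℝ := (p⁻¹).toReal

/-- The Hölder–Young exponent function `R_N(p) = (N-1)⁻¹ (Σ_{j=0}^N 1/p_j - 1)`. -/
def RN (N : ℕ) (p : Fin (N + 1) → ℝ≥0∞) : ℝ :=
  ((∑ j, rcp (p j)) - 1) / ((N : ℝ) - 1)

/-- The Weyl weight condition:
`1 ≲ ω₀(X_N+X₀, X_N-X₀) ∏_{j=1}^N ω_j(X_j+X_{j-1}, X_j-X_{j-1})`. -/
def WeylWeightCond (d N : ℕ) (ω : Fin (N + 1) → (PhS d × PhS d → ℝ)) : Prop :=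
  ∃ C : ℝ, 0 < C ∧ ∀ X : Fin (N + 1) → PhS d,
    1 ≤ C * ω 0 (X (Fin.last N) + X 0, X (Fin.last N) - X 0) *
      ∏ j : Fin N, ω j.succ (X j.succ + X j.castSucc, X j.succ - X j.castSucc)

end

noncomputable section Helpers

instance instHaarPhS (d : ℕ) : (volume : Measure (PhS d)).IsAddHaarMeasure := by
  rw [Measure.volume_eq_prod]; infer_instance

def Qs {d : ℕ} (s : ℝ) (X : PhS d) : ℝ := s ^ 2 * ‖X.1‖ ^ 2 + (s ^ 2)⁻¹ * ‖X.2‖ ^ 2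

def gaS {d : ℕ} (s : ℝ) (X : PhS d) : ℂ := Complex.exp (((-Qs s X : ℝ)) : ℂ)

lemma norm_gaS {d : ℕ} (s : ℝ) (X : PhS d) : ‖gaS s X‖ = Real.exp (-Qs s X) := by
  rw [gaS, Complex.norm_exp, Complex.ofReal_re]

lemma gauss_int {d : ℕ} {s t : ℝ} (hs : 0 < s) (ht : 0 < t) (X : PhS d) :
    ∫ Y : PhS d, Complex.exp (((-(t * Qs s Y) : ℝ)) : ℂ) *
      Complex.exp (2 * Complex.I * (symplForm X Y : ℂ)) =
    ((Real.pi / t : ℝ) : ℂ) ^ d * Complex.exp (((-(t⁻¹ * Qs s X) : ℝ)) : ℂ) := by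
  have h1 : 0 < ((t * s ^ 2 : ℝ) : ℂ).re := by rw [Complex.ofReal_re]; positivity
  have h2 : 0 < ((t * (s ^ 2)⁻¹ : ℝ) : ℂ).re := by rw [Complex.ofReal_re]; positivity
  have e1 := GaussianFourier.integral_cexp_neg_mul_sq_norm_add h1 (2 * Complex.I) X.2
  have e2 := GaussianFourier.integral_cexp_neg_mul_sq_norm_add h2 (-(2 * Complex.I)) X.1
  rw [Measure.volume_eq_prod]
  have : ∀ Y : PhS d, Complex.exp (((-(t * Qs s Y) : ℝ)) : ℂ) *
      Complex.exp (2 * Complex.I * (symplForm X Y : ℂ)) =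
      Complex.exp (-((t * s ^ 2 : ℝ) : ℂ) * ‖Y.1‖ ^ 2 + (2 * Complex.I) * ⟪X.2, Y.1⟫) *
      Complex.exp (-((t * (s ^ 2)⁻¹ : ℝ) : ℂ) * ‖Y.2‖ ^ 2 + (-(2 * Complex.I)) * ⟪X.1, Y.2⟫) := by
    intro Y
    rw [← Complex.exp_add, ← Complex.exp_add]
    congr 1
    simp only [Qs, symplForm]
    rw [real_inner_comm]
    push_cast
    ring
  simp_rw [this]
  rw [integral_prod_mul (fun y : EuclideanSpace ℝ (Fin d) => Complex.exp (-((t * s ^ 2 : ℝ) : ℂ) * ‖y‖ ^ 2 + (2 * Complex.I) * ⟪X.2, y⟫)) (fun y : EuclideanSpace ℝ (Fin d) => Complex.exp (-((t * (s ^ 2)⁻¹ : ℝ) : ℂ) * ‖y‖ ^ 2 + (-(2 * Complex.I)) * ⟪X.1, y⟫)), e1, e2]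
  have h3 : ((Real.pi : ℂ) / ((t * s ^ 2 : ℝ) : ℂ)) ^ ((Module.finrank ℝ (EuclideanSpace ℝ (Fin d)) : ℂ) / 2) *
     ((Real.pi : ℂ) / ((t * (s ^ 2)⁻¹ : ℝ) : ℂ)) ^ ((Module.finrank ℝ (EuclideanSpace ℝ (Fin d)) : ℂ) / 2) = ((Real.pi / t : ℝ) : ℂ) ^ d := by
    rw [finrank_euclideanSpace_fin, ← Complex.ofReal_div, ← Complex.ofReal_div,
      ← Complex.mul_cpow_ofReal_nonneg (by positivity) (by positivity), ← Complex.ofReal_mul]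
    have : Real.pi / (t * s ^ 2) * (Real.pi / (t * (s ^ 2)⁻¹)) = (Real.pi / t) ^ 2 := by
      field_simp
    rw [this]
    have h4 : ((d : ℂ) / 2) = (((d : ℝ) / 2 : ℝ) : ℂ) := by push_cast; rfl
    rw [h4, ← Complex.ofReal_cpow (by positivity), ← Real.rpow_natCast _ 2, ← Real.rpow_mul (by positivity)]
    norm_cast
    rw [← Real.rpow_natCast]
    congr 1
    push_cast
    ring
  rw [mul_mul_mul_comm, h3, ← Complex.exp_add]
  congr 2
  have hsc : (s : ℂ) ≠ 0 := by exact_mod_cast hs.ne'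
  have htc : (t : ℂ) ≠ 0 := by exact_mod_cast ht.ne'
  simp only [Qs, mul_pow, neg_sq, Complex.I_sq]
  push_cast
  field_simp
  ring

lemma symplFT_gaS {d : ℕ} {s : ℝ} (hs : 0 < s) : symplFT d (gaS s) = gaS s := by
  funext X
  have := gauss_int hs one_pos X
  simp only [one_mul, inv_one, div_one] at this
  simp only [symplFT, gaS]
  rw [this, ← mul_assoc, inv_mul_cancel₀, one_mul]
  exact pow_ne_zero _ (by exact_mod_cast Real.pi_ne_zero)

lemma weyl_gaS {d : ℕ} {s : ℝ} (hs : 0 < s) :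
    weylProd d (gaS s) (gaS s) = fun X => ((2 : ℂ) ^ d)⁻¹ * gaS s X := by
  funext X
  simp only [weylProd, twistConv, symplFT_gaS hs]
  have key : ∫ Y : PhS d, gaS s (X - Y) * gaS s Y * Complex.exp (2 * Complex.I * (symplForm X Y : ℂ))
      = ((Real.pi / 2 : ℝ) : ℂ) ^ d * gaS s X := by
    rw [← integral_add_right_eq_self (μ := volume) _ ((2 : ℝ)⁻¹ • X)]
    have h : ∀ Y : PhS d, gaS s (X - (Y + (2 : ℝ)⁻¹ • X)) * gaS s (Y + (2 : ℝ)⁻¹ • X) *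
        Complex.exp (2 * Complex.I * (symplForm X (Y + (2 : ℝ)⁻¹ • X) : ℂ)) =
        Complex.exp (((-(2⁻¹ * Qs s X) : ℝ)) : ℂ) * (Complex.exp (((-(2 * Qs s Y) : ℝ)) : ℂ) *
      Complex.exp (2 * Complex.I * (symplForm X Y : ℂ))) := by
      intro Y
      have hσ : symplForm X (Y + (2 : ℝ)⁻¹ • X) = symplForm X Y := by
        simp only [symplForm, Prod.fst_add, Prod.snd_add, Prod.smul_fst, Prod.smul_snd,
          inner_add_left, inner_add_right, real_inner_smul_left, real_inner_smul_right]
        ring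
      have hn : ∀ x y : EuclideanSpace ℝ (Fin d), ‖x - (y + (2 : ℝ)⁻¹ • x)‖ ^ 2 + ‖y + (2 : ℝ)⁻¹ • x‖ ^ 2
          = 2⁻¹ * ‖x‖ ^ 2 + 2 * ‖y‖ ^ 2 := by
        intro x y
        have : x - (y + (2 : ℝ)⁻¹ • x) = (2 : ℝ)⁻¹ • x - y := by module
        rw [this, norm_sub_sq_real, norm_add_sq_real, norm_smul, real_inner_smul_left, real_inner_smul_right,
          real_inner_comm]
        norm_num
        ring
      rw [hσ, ← mul_assoc]
      congr 1
      simp only [gaS]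
      rw [← Complex.exp_add, ← Complex.exp_add, ← Complex.ofReal_add, ← Complex.ofReal_add]
      congr 2
      have n1 := hn X.1 Y.1
      have n2 := hn X.2 Y.2
      simp only [Qs, Prod.fst_sub, Prod.snd_sub, Prod.fst_add, Prod.snd_add, Prod.smul_fst, Prod.smul_snd]
      linear_combination (-s ^ 2) * n1 - (s ^ 2)⁻¹ * n2
    simp_rw [h]
    rw [integral_const_mul, gauss_int hs two_pos X]
    rw [mul_left_comm, ← Complex.exp_add, ← Complex.ofReal_add, gaS]
    congr 4
    ring
  rw [key, ← mul_assoc, ← mul_assoc]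
  congr 1
  suffices H : ((2 * Real.pi) ^ (-(d : ℝ) / 2) * (2 / Real.pi) ^ ((d : ℝ) / 2) * (Real.pi / 2) ^ d : ℝ) = (2 ^ d)⁻¹ by
    rw [← Complex.ofReal_mul, ← Complex.ofReal_pow, ← Complex.ofReal_mul, H]
    push_cast
    rfl
  rw [Real.div_rpow (by positivity) (by positivity), neg_div, Real.rpow_neg (by positivity), Real.mul_rpow (by positivity) (by positivity), div_pow]
  have e : Real.pi ^ d = Real.pi ^ ((d : ℝ) / 2) * Real.pi ^ ((d : ℝ) / 2) := by
    rw [← Real.rpow_add Real.pi_pos, ← Real.rpow_natCast]; congr 1; ring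
  rw [e]
  have : (0 : ℝ) < Real.pi ^ ((d : ℝ) / 2) := by positivity
  have : (0 : ℝ) < 2 ^ ((d : ℝ) / 2) := by positivity
  have e2 : (2 : ℝ) ^ d = 2 ^ ((d : ℝ) / 2) * 2 ^ ((d : ℝ) / 2) := by
    rw [← Real.rpow_add two_pos, ← Real.rpow_natCast]; congr 1; ring
  rw [e2]
  field_simp

lemma exists_schwartz_gaS {d : ℕ} {s : ℝ} (hs : 0 < s) :
    ∃ f : SchwartzMap (PhS d) ℂ, ⇑f = gaS s := by
  have htg : Function.HasTemperateGrowth (fun X : PhS d => (-Qs s X : ℝ)) := by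
    have t1 : Function.HasTemperateGrowth (fun X : PhS d => X.1) :=
      (ContinuousLinearMap.fst ℝ (EuclideanSpace ℝ (Fin d)) (EuclideanSpace ℝ (Fin d))).hasTemperateGrowth
    have t2 : Function.HasTemperateGrowth (fun X : PhS d => X.2) :=
      (ContinuousLinearMap.snd ℝ (EuclideanSpace ℝ (Fin d)) (EuclideanSpace ℝ (Fin d))).hasTemperateGrowth
    have n1 := (Function.hasTemperateGrowth_norm_sq (H := EuclideanSpace ℝ (Fin d))).comp t1
    have n2 := (Function.hasTemperateGrowth_norm_sq (H := EuclideanSpace ℝ (Fin d))).comp t2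
    have := (((Function.HasTemperateGrowth.const (s ^ 2)).mul n1).add
      ((Function.HasTemperateGrowth.const ((s ^ 2)⁻¹)).mul n2)).neg
    exact this
  have hcoer : ∃ c > 0, ∀ X : PhS d, c * ‖X‖ ^ 2 ≤ Qs s X := by
    refine ⟨min (s ^ 2) (s ^ 2)⁻¹, by positivity, fun X => ?_⟩
    rw [Qs, Prod.norm_def]
    have i1 := min_le_left (s ^ 2) (s ^ 2)⁻¹
    have i2 := min_le_right (s ^ 2) (s ^ 2)⁻¹
    have : 0 < s ^ 2 := by positivity
    have : 0 < (s ^ 2)⁻¹ := by positivity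
    rcases max_choice ‖X.1‖ ‖X.2‖ with h | h <;> rw [h] <;> nlinarith [sq_nonneg ‖X.1‖, sq_nonneg ‖X.2‖]
  obtain ⟨c, hc, hQ⟩ := hcoer
  have hbdd : ∀ m : ℕ, ∃ B : ℝ, ∀ x : ℝ, 0 ≤ x → (1 + x) ^ m * Real.exp (-(c * x ^ 2)) ≤ B := by
    intro m
    refine ⟨m.factorial * Real.exp (1 + 1 / (4 * c)), fun x hx => ?_⟩
    have h1 := Real.pow_div_factorial_le_exp (1 + x) (by linarith) m
    rw [div_le_iff₀ (by positivity)] at h1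
    calc _ ≤ Real.exp (1 + x) * m.factorial * Real.exp (-(c * x ^ 2)) := by gcongr
      _ = m.factorial * Real.exp (1 + x + -(c * x ^ 2)) := by rw [Real.exp_add (1 + x)]; ring
      _ ≤ _ := by
        have : x - c * x ^ 2 ≤ 1 / (4 * c) := by
          rw [le_div_iff₀ (by positivity)]
          nlinarith [sq_nonneg (2 * c * x - 1)]
        have h3 : 1 + x + -(c * x ^ 2) ≤ 1 + 1 / (4 * c) := by linarith
        gcongr
  refine ⟨⟨gaS s, ?_, ?_⟩, rfl⟩
  · have := Complex.ofRealCLM.contDiff.comp (Real.contDiff_exp.comp htg.1)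
    have e : gaS s = ⇑Complex.ofRealCLM ∘ (Real.exp ∘ fun X : PhS d => -Qs s X) := by
      funext X; simp [gaS]
    rw [e]; exact this
  · intro k n
    obtain ⟨l, K, hK, hb⟩ := htg.norm_iteratedFDeriv_le_uniform n
    obtain ⟨B, hB⟩ := hbdd (k + l * n)
    refine ⟨n.factorial * (1 + K) ^ n * B, fun X => ?_⟩
    have hx := norm_nonneg X
    have := norm_iteratedFDeriv_comp_le (𝕜 := ℝ) (g := Real.exp) (f := fun X : PhS d => (-Qs s X : ℝ))
      (n := n) (N := n) Real.contDiff_exp (htg.1.of_le (by exact_mod_cast le_top)) le_rfl X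
      (C := Real.exp (-Qs s X)) (D := (1 + K) * (1 + ‖X‖) ^ l) (fun i hi => ?_) (fun i hi1 hi => ?_)
    · have e : gaS s = ⇑Complex.ofRealLI ∘ (Real.exp ∘ fun X : PhS d => -Qs s X) := by
        funext X; simp [gaS]
      rw [e, Complex.ofRealLI.norm_iteratedFDeriv_comp_left (n := n)
        ((Real.contDiff_exp.comp (htg.1.of_le (by exact_mod_cast le_top))).contDiffAt) le_rfl]
      calc _ ≤ ‖X‖ ^ k * (n.factorial * Real.exp (-Qs s X) * ((1 + K) * (1 + ‖X‖) ^ l) ^ n) := by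
            gcongr
        _ ≤ (1 + ‖X‖) ^ k * (n.factorial * Real.exp (-(c * ‖X‖ ^ 2)) * ((1 + K) * (1 + ‖X‖) ^ l) ^ n) := by
            gcongr
            · linarith
            · exact hQ X
        _ = n.factorial * (1 + K) ^ n * ((1 + ‖X‖) ^ (k + l * n) * Real.exp (-(c * ‖X‖ ^ 2))) := by
            rw [mul_pow, ← pow_mul, pow_add]; ring
        _ ≤ _ := by gcongr; exact hB _ hx
    · rw [norm_iteratedFDeriv_eq_norm_iteratedDeriv, iteratedDeriv_eq_iterate, Real.iter_deriv_exp, Real.norm_of_nonneg (Real.exp_pos _).le]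
    · calc _ ≤ K * (1 + ‖X‖) ^ l := hb i hi X
        _ ≤ (1 + K) * (1 + ‖X‖) ^ l := by gcongr; linarith
        _ ≤ _ := le_self_pow₀ (by nlinarith [one_le_pow₀ (n := l) (show 1 ≤ 1 + ‖X‖ by linarith)]) (by omega)

instance instNegPhS (d : ℕ) : (volume : Measure (PhS d)).IsNegInvariant :=
  Measure.IsAddHaarMeasure.isNegInvariant_of_regular _

def rotB (d : ℕ) : PhS d ≃ₗ[ℝ] PhS d where
  toFun Y := (-(Real.pi⁻¹ : ℝ) • Y.2, (Real.pi⁻¹ : ℝ) • Y.1)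
  invFun Y := (Real.pi • Y.2, -Real.pi • Y.1)
  map_add' X Y := by ext <;> simp
  map_smul' c Y := by ext <;> simp <;> ring
  left_inv Y := by ext <;> simp [Real.pi_ne_zero]
  right_inv Y := by ext <;> simp [Real.pi_ne_zero]

open scoped FourierTransform in
lemma symplFT_props (d : ℕ) : ∃ κ : ℝ, 0 < κ ∧ ∀ f : SchwartzMap (PhS d) ℂ,
    ∃ g : SchwartzMap (PhS d) ℂ, ⇑g = symplFT d ⇑f ∧ ∫ Y, ‖g Y‖ ^ 2 = κ * ∫ Y, ‖f Y‖ ^ 2 := by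
  let E := EuclideanSpace ℝ (Fin d)
  let T : WithLp 2 (E × E) ≃L[ℝ] PhS d := WithLp.prodContinuousLinearEquiv 2 ℝ E E
  have hT : MeasurePreserving T := WithLp.volume_preserving_ofLp E E
  have hTe : MeasurableEmbedding T := T.toHomeomorph.measurableEmbedding
  let B : PhS d ≃L[ℝ] PhS d := (rotB d).toContinuousLinearEquiv
  have hBe : MeasurableEmbedding B := B.toHomeomorph.measurableEmbedding
  have hdet : LinearMap.det (rotB d : PhS d →ₗ[ℝ] PhS d) ≠ 0 := (LinearEquiv.isUnit_det' (rotB d)).ne_zero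
  have hmap := Measure.map_linearMap_addHaar_eq_smul_addHaar (volume : Measure (PhS d)) hdet
  set D := |(LinearMap.det (rotB d : PhS d →ₗ[ℝ] PhS d))⁻¹| with hD
  have hD0 : 0 < D := abs_pos.2 (inv_ne_zero hdet)
  refine ⟨(Real.pi ^ d)⁻¹ ^ 2 * D, by positivity, fun f => ?_⟩
  let F : SchwartzMap (WithLp 2 (E × E)) ℂ := SchwartzMap.compCLMOfContinuousLinearEquiv ℝ T f
  let g : SchwartzMap (PhS d) ℂ := ((Real.pi : ℂ) ^ d)⁻¹ •
    SchwartzMap.compCLMOfContinuousLinearEquiv ℝ (B.trans T.symm) (𝓕 F)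
  have hg : ∀ Y, g Y = ((Real.pi : ℂ) ^ d)⁻¹ * (𝓕 F) (T.symm (B Y)) := fun Y => rfl
  refine ⟨g, ?_, ?_⟩
  · funext Y
    rw [hg, SchwartzMap.fourier_coe, Real.fourier_eq', symplFT, ← hT.integral_comp hTe]
    congr 2
    funext Z
    rw [smul_eq_mul, mul_comm]
    refine congrArg₂ (· * ·) rfl (congrArg Complex.exp ?_)
    have : inner ℝ Z (T.symm (B Y)) = -Real.pi⁻¹ * symplForm Y (T Z) := by
      rw [WithLp.prod_inner_apply]
      have h1 : (T.symm (B Y)).fst = -(Real.pi⁻¹ : ℝ) • Y.2 := rfl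
      have h2 : (T.symm (B Y)).snd = (Real.pi⁻¹ : ℝ) • Y.1 := rfl
      have h3 : T Z = (Z.fst, Z.snd) := rfl
      have h4 : WithLp.ofLp (T.symm (B Y)) = (-(Real.pi⁻¹ : ℝ) • Y.2, (Real.pi⁻¹ : ℝ) • Y.1) := rfl
      rw [h4, h3, symplForm]
      simp only [inner_smul_right, real_inner_comm]
      have h5 : Z.ofLp.1 = Z.fst := rfl
      have h6 : Z.ofLp.2 = Z.snd := rfl
      rw [h5, h6]
      simp only [real_inner_comm]
      ring
    rw [this]
    push_cast
    have : (Real.pi : ℂ) ≠ 0 := by exact_mod_cast Real.pi_ne_zero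
    field_simp
  · have e1 : ∀ Y, ‖g Y‖ ^ 2 = (Real.pi ^ d)⁻¹ ^ 2 * ‖(𝓕 F) (T.symm (B Y))‖ ^ 2 := by
      intro Y
      rw [hg, norm_mul, mul_pow]
      congr 2
      rw [norm_inv, norm_pow, Complex.norm_real, Real.norm_of_nonneg Real.pi_pos.le]
    simp_rw [e1]
    rw [integral_const_mul, mul_assoc]
    congr 1
    have e2 : ∫ Y, ‖(𝓕 F) (T.symm (B Y))‖ ^ 2 = D * ∫ Y, ‖(𝓕 F) (T.symm Y)‖ ^ 2 := by
      have e3 := hBe.integral_map (μ := volume) (fun Y => ‖(𝓕 F) (T.symm Y)‖ ^ 2)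
      rw [← e3]
      have : Measure.map B volume = ENNReal.ofReal D • (volume : Measure (PhS d)) := hmap
      rw [this, integral_smul_measure, ENNReal.toReal_ofReal hD0.le, smul_eq_mul]
    rw [e2]
    congr 1
    rw [← hT.integral_comp hTe, ← hT.integral_comp hTe]
    simp only [ContinuousLinearEquiv.symm_apply_apply]
    rw [SchwartzMap.integral_norm_sq_fourier]
    rfl

lemma exists_conj (d : ℕ) (Φ : SchwartzMap (PhS d) ℂ) : ∃ Ψ : SchwartzMap (PhS d) ℂ,
    ∀ Z, Ψ Z = (starRingEnd ℂ) (Φ Z) :=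
  ⟨SchwartzMap.postcompCLM (𝕜 := ℝ) (Complex.conjCLE : ℂ →L[ℝ] ℂ) Φ, fun Z => by
    simp [SchwartzMap.postcompCLM_apply]⟩

lemma exists_mul_shift (d : ℕ) (a Ψ : SchwartzMap (PhS d) ℂ) (X : PhS d) :
    ∃ h : SchwartzMap (PhS d) ℂ, ∀ Z, h Z = a Z * Ψ (Z - X) :=
  ⟨SchwartzMap.pairing (ContinuousLinearMap.mul ℂ ℂ) a (SchwartzMap.compSubConstCLM ℂ X Ψ), fun Z => by
    simp [SchwartzMap.pairing_apply_apply]⟩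

lemma lint_sq {d : ℕ} (g : SchwartzMap (PhS d) ℂ) :
    ∫⁻ Y, ENNReal.ofReal (‖g Y‖ ^ 2) = ENNReal.ofReal (∫ Y, ‖g Y‖ ^ 2) := by
  rw [ofReal_integral_eq_lintegral_ofReal]
  · exact (g.memLp 2 volume).integrable_norm_pow (by norm_num)
  · exact Eventually.of_forall fun Y => by positivity

/-- Moyal-type identity. -/
lemma moyal (d : ℕ) (Φ : SchwartzMap (PhS d) ℂ) : ∃ κ : ℝ, 0 < κ ∧ ∀ a : SchwartzMap (PhS d) ℂ,
    ∫⁻ X, ∫⁻ Y, ENNReal.ofReal (‖symplSTFT d Φ a X Y‖ ^ 2) =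
      ENNReal.ofReal (κ * (∫ Y, ‖a Y‖ ^ 2) * ∫ Y, ‖Φ Y‖ ^ 2) := by
  obtain ⟨κ, hκ, H⟩ := symplFT_props d
  refine ⟨κ, hκ, fun a => ?_⟩
  obtain ⟨Ψ, hΨ⟩ := exists_conj d Φ
  have e1 : ∀ X, ∫⁻ Y, ENNReal.ofReal (‖symplSTFT d Φ a X Y‖ ^ 2) =
      ENNReal.ofReal κ * ∫⁻ Z, ENNReal.ofReal (‖a Z‖ ^ 2) * ENNReal.ofReal (‖Φ (Z - X)‖ ^ 2) := by
    intro X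
    obtain ⟨h, hh⟩ := exists_mul_shift d a Ψ X
    obtain ⟨g, hg, hg2⟩ := H h
    have : ∀ Y, symplSTFT d Φ a X Y = g Y := by
      intro Y
      rw [hg, symplSTFT, symplFT]
      simp_rw [hh, hΨ]
    simp_rw [this]
    rw [lint_sq, hg2, ENNReal.ofReal_mul hκ.le, ← lint_sq]
    congr 2
    funext Z
    rw [hh, hΨ, norm_mul, mul_pow, ENNReal.ofReal_mul (by positivity), RCLike.norm_conj]
  simp_rw [e1]
  have ca : Continuous a := a.continuous
  have cΦ : Continuous Φ := Φ.continuous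
  rw [lintegral_const_mul' _ _ ENNReal.ofReal_ne_top, lintegral_lintegral_swap (by fun_prop)]
  have e2 : ∀ Z, ∫⁻ X, ENNReal.ofReal (‖a Z‖ ^ 2) * ENNReal.ofReal (‖Φ (Z - X)‖ ^ 2) =
      ENNReal.ofReal (‖a Z‖ ^ 2) * ENNReal.ofReal (∫ Y, ‖Φ Y‖ ^ 2) := by
    intro Z
    rw [lintegral_const_mul' _ _ ENNReal.ofReal_ne_top,
      lintegral_sub_left_eq_self (μ := volume) (fun X => ENNReal.ofReal (‖Φ X‖ ^ 2)), lint_sq]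
  simp_rw [e2]
  rw [lintegral_mul_const' _ _ ENNReal.ofReal_ne_top, lint_sq, ← ENNReal.ofReal_mul (by positivity),
    ← ENNReal.ofReal_mul (by positivity), mul_assoc]

lemma schwartz_decay {d : ℕ} (g : SchwartzMap (PhS d) ℂ) (L : ℕ) :
    ∃ K : ℝ, 0 < K ∧ ∀ Z, ‖g Z‖ ≤ K * ((1 + ‖Z‖) ^ L)⁻¹ := by
  refine ⟨2 ^ L * ((Finset.Iic ((L, 0) : ℕ × ℕ)).sup fun m => SchwartzMap.seminorm ℝ m.1 m.2) g + 1,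
    by positivity, fun Z => ?_⟩
  have := SchwartzMap.one_add_le_sup_seminorm_apply (𝕜 := ℝ) (m := (L, 0)) (k := L) (n := 0) le_rfl le_rfl g Z
  rw [norm_iteratedFDeriv_zero] at this
  rw [← div_eq_mul_inv, le_div_iff₀ (by positivity)]
  dsimp only at this
  linarith

def wt {d : ℕ} (N : ℕ) (s : ℝ) (X : PhS d) : ℝ := ((1 + ‖X.1‖) ^ N)⁻¹ * ((1 + s⁻¹ * ‖X.2‖) ^ N)⁻¹

lemma gbdd (m : ℕ) : ∃ B : ℝ, 0 < B ∧ ∀ x : ℝ, 0 ≤ x → (1 + x) ^ m * Real.exp (-(x ^ 2 / 2)) ≤ B := by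
  refine ⟨m.factorial * Real.exp (1 + 1 / 2), by positivity, fun x hx => ?_⟩
  have h1 := Real.pow_div_factorial_le_exp (1 + x) (by linarith) m
  rw [div_le_iff₀ (by positivity)] at h1
  calc _ ≤ Real.exp (1 + x) * m.factorial * Real.exp (-(x ^ 2 / 2)) := by gcongr
    _ = m.factorial * Real.exp (1 + x + -(x ^ 2 / 2)) := by rw [Real.exp_add (1 + x)]; ring
    _ ≤ _ := by
      have h3 : 1 + x + -(x ^ 2 / 2) ≤ 1 + 1 / 2 := by nlinarith [sq_nonneg (x - 1)]
      gcongr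

lemma conv_bound (d M : ℕ) (hM : d < M) (K : ℝ) (hK : 0 < K) : ∃ K' : ℝ, 0 < K' ∧
    ∀ s : ℝ, 1 ≤ s → ∀ (X : PhS d) (f : PhS d → ℂ),
      (∀ Z, ‖f Z‖ ≤ Real.exp (-Qs s Z) * (K * ((1 + ‖Z - X‖) ^ (3 * M))⁻¹)) →
      ‖∫ Z, f Z‖ ≤ K' * (s ^ d)⁻¹ * wt M s X := by
  obtain ⟨B, hB, hBB⟩ := gbdd M
  let E := EuclideanSpace ℝ (Fin d)
  have hint : Integrable (fun ζ : E => ((1 + ‖ζ‖) ^ M)⁻¹) := by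
    have := integrable_one_add_norm (E := E) (μ := volume) (r := M)
      (by rw [finrank_euclideanSpace_fin]; exact_mod_cast hM)
    refine this.congr (Eventually.of_forall fun x => ?_)
    simp only
    rw [Real.rpow_neg (by positivity), Real.rpow_natCast]
  set I := ∫ ζ : E, ((1 + ‖ζ‖) ^ M)⁻¹ with hI
  have hI0 : 0 ≤ I := integral_nonneg fun ζ => by positivity
  refine ⟨K * B * B * ((2 * Real.pi) ^ ((d : ℝ) / 2) * (I + 1)), by positivity, fun s hs X f hf => ?_⟩
  have hs0 : 0 < s := by linarith
  have hsi : s⁻¹ ≤ 1 := inv_le_one_of_one_le₀ hs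
  let G : PhS d → ℝ := fun Z => (K * B * B * wt M s X) *
    (Real.exp (-(s ^ 2 / 2) * ‖Z.1‖ ^ 2) * ((1 + ‖Z.2 - X.2‖) ^ M)⁻¹)
  have hg1 : Integrable (fun z : E => Real.exp (-(s ^ 2 / 2) * ‖z‖ ^ 2)) := by
    have hb : 0 < ((s ^ 2 / 2 : ℝ) : ℂ).re := by rw [Complex.ofReal_re]; positivity
    have := (GaussianFourier.integrable_cexp_neg_mul_sq_norm_add (V := E) hb 0 0).norm
    refine this.congr (Eventually.of_forall fun x => ?_)
    simp only [zero_mul, add_zero]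
    rw [Complex.norm_exp, ← Complex.ofReal_neg, ← Complex.ofReal_pow, ← Complex.ofReal_mul, Complex.ofReal_re]
  have hg2 : Integrable (fun ζ : E => ((1 + ‖ζ - X.2‖) ^ M)⁻¹) := hint.comp_sub_right X.2
  have hG : Integrable G := (hg1.mul_prod hg2).const_mul _
  have hGi : ∫ Z, G Z = (K * B * B * wt M s X) * ((2 * Real.pi) ^ ((d : ℝ) / 2) * (s ^ d)⁻¹ * I) := by
    simp only [G]
    rw [integral_const_mul, Measure.volume_eq_prod, integral_prod_mul (fun z : E => Real.exp (-(s ^ 2 / 2) * ‖z‖ ^ 2))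
      (fun ζ : E => ((1 + ‖ζ - X.2‖) ^ M)⁻¹), GaussianFourier.integral_rexp_neg_mul_sq_norm (by positivity),
      integral_sub_right_eq_self (μ := volume) (fun ζ : E => ((1 + ‖ζ‖) ^ M)⁻¹), finrank_euclideanSpace_fin]
    congr 3
    have : Real.pi / (s ^ 2 / 2) = (2 * Real.pi) * (s ^ 2)⁻¹ := by field_simp
    rw [this, Real.mul_rpow (by positivity) (by positivity), Real.inv_rpow (by positivity)]
    congr 2
    rw [← Real.rpow_natCast, ← Real.rpow_natCast, ← Real.rpow_mul hs0.le]
    congr 1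
    push_cast
    ring
  have hmain : ∀ Z, ‖f Z‖ ≤ G Z := by
    intro Z
    refine (hf Z).trans ?_
    have a1 := norm_nonneg Z.1
    have a2 := norm_nonneg Z.2
    have a3 := norm_nonneg X.1
    have a4 := norm_nonneg X.2
    have a5 := norm_nonneg (Z.1 - X.1)
    have a6 := norm_nonneg (Z.2 - X.2)
    have t1 : ‖X.1‖ ≤ ‖Z.1‖ + ‖Z.1 - X.1‖ := by
      have := norm_sub_le Z.1 (Z.1 - X.1); rwa [sub_sub_cancel] at this
    have t2 : ‖X.2‖ ≤ ‖Z.2‖ + ‖Z.2 - X.2‖ := by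
      have := norm_sub_le Z.2 (Z.2 - X.2); rwa [sub_sub_cancel] at this
    have u1 : (1 + ‖X.1‖) ^ M ≤ (1 + ‖Z.1‖) ^ M * (1 + ‖Z.1 - X.1‖) ^ M := by
      rw [← mul_pow]; gcongr; nlinarith
    have u2 : (1 + s⁻¹ * ‖X.2‖) ^ M ≤ (1 + s⁻¹ * ‖Z.2‖) ^ M * (1 + ‖Z.2 - X.2‖) ^ M := by
      rw [← mul_pow]; gcongr
      have : 0 < s⁻¹ := by positivity
      have e1 : s⁻¹ * ‖X.2‖ ≤ s⁻¹ * ‖Z.2‖ + s⁻¹ * ‖Z.2 - X.2‖ := by rw [← mul_add]; gcongr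
      have e2 : s⁻¹ * ‖Z.2 - X.2‖ ≤ ‖Z.2 - X.2‖ := mul_le_of_le_one_left a6 hsi
      have e3 : 0 ≤ s⁻¹ * ‖Z.2‖ * ‖Z.2 - X.2‖ := by positivity
      nlinarith
    have v1 := hBB _ a1
    have v2 := hBB (s⁻¹ * ‖Z.2‖) (by positivity)
    have n1 : ‖Z.1 - X.1‖ ≤ ‖Z - X‖ := norm_fst_le (Z - X)
    have n2 : ‖Z.2 - X.2‖ ≤ ‖Z - X‖ := norm_snd_le (Z - X)
    have k1 : ((1 + ‖Z - X‖) ^ (3 * M))⁻¹ ≤ ((1 + ‖Z.1 - X.1‖) ^ M)⁻¹ * (((1 + ‖Z.2 - X.2‖) ^ M)⁻¹ * ((1 + ‖Z.2 - X.2‖) ^ M)⁻¹) := by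
      rw [← mul_inv, ← mul_inv]
      have : (1 + ‖Z - X‖) ^ (3 * M) = (1 + ‖Z - X‖) ^ M * ((1 + ‖Z - X‖) ^ M * (1 + ‖Z - X‖) ^ M) := by ring
      rw [this]
      gcongr
    have x1 : Real.exp (-Qs s Z) ≤ Real.exp (-(s ^ 2 / 2) * ‖Z.1‖ ^ 2) * (Real.exp (-(‖Z.1‖ ^ 2 / 2)) * Real.exp (-((s⁻¹ * ‖Z.2‖) ^ 2 / 2))) := by
      rw [← Real.exp_add, ← Real.exp_add]
      apply Real.exp_le_exp.2
      rw [Qs, mul_pow, inv_pow]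
      have : 1 ≤ s ^ 2 := one_le_pow₀ hs
      have : 0 < (s ^ 2)⁻¹ := by positivity
      nlinarith [mul_nonneg this.le (sq_nonneg ‖Z.2‖), sq_nonneg ‖Z.1‖]
    simp only [G, wt]
    set e0 := Real.exp (-(s ^ 2 / 2) * ‖Z.1‖ ^ 2)
    set e1 := Real.exp (-(‖Z.1‖ ^ 2 / 2))
    set e2 := Real.exp (-((s⁻¹ * ‖Z.2‖) ^ 2 / 2))
    have pe0 : 0 < e0 := Real.exp_pos _
    have pe1 : 0 < e1 := Real.exp_pos _
    have pe2 : 0 < e2 := Real.exp_pos _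
    have w1 : e1 * ((1 + ‖Z.1 - X.1‖) ^ M)⁻¹ ≤ B * ((1 + ‖X.1‖) ^ M)⁻¹ := by
      rw [← div_eq_mul_inv, ← div_eq_mul_inv, div_le_div_iff₀ (by positivity) (by positivity)]
      calc e1 * (1 + ‖X.1‖) ^ M ≤ e1 * ((1 + ‖Z.1‖) ^ M * (1 + ‖Z.1 - X.1‖) ^ M) := by gcongr
        _ = ((1 + ‖Z.1‖) ^ M * e1) * (1 + ‖Z.1 - X.1‖) ^ M := by ring
        _ ≤ _ := by gcongr
    have w2 : e2 * ((1 + ‖Z.2 - X.2‖) ^ M)⁻¹ ≤ B * ((1 + s⁻¹ * ‖X.2‖) ^ M)⁻¹ := by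
      rw [← div_eq_mul_inv, ← div_eq_mul_inv, div_le_div_iff₀ (by positivity) (by positivity)]
      calc e2 * (1 + s⁻¹ * ‖X.2‖) ^ M ≤ e2 * ((1 + s⁻¹ * ‖Z.2‖) ^ M * (1 + ‖Z.2 - X.2‖) ^ M) := by gcongr
        _ = ((1 + s⁻¹ * ‖Z.2‖) ^ M * e2) * (1 + ‖Z.2 - X.2‖) ^ M := by ring
        _ ≤ _ := by gcongr
    calc _ ≤ (e0 * (e1 * e2)) * (K * (((1 + ‖Z.1 - X.1‖) ^ M)⁻¹ * (((1 + ‖Z.2 - X.2‖) ^ M)⁻¹ * ((1 + ‖Z.2 - X.2‖) ^ M)⁻¹))) := by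
          gcongr
      _ = K * (e1 * ((1 + ‖Z.1 - X.1‖) ^ M)⁻¹) * (e2 * ((1 + ‖Z.2 - X.2‖) ^ M)⁻¹) * (e0 * ((1 + ‖Z.2 - X.2‖) ^ M)⁻¹) := by ring
      _ ≤ K * (B * ((1 + ‖X.1‖) ^ M)⁻¹) * (B * ((1 + s⁻¹ * ‖X.2‖) ^ M)⁻¹) * (e0 * ((1 + ‖Z.2 - X.2‖) ^ M)⁻¹) := by gcongr
      _ = _ := by ring
  have := norm_integral_le_of_norm_le hG (Eventually.of_forall hmain)
  refine this.trans ?_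
  rw [hGi]
  have hw : 0 ≤ wt M s X := by unfold wt; positivity
  calc _ ≤ (K * B * B * wt M s X) * ((2 * Real.pi) ^ ((d : ℝ) / 2) * (s ^ d)⁻¹ * (I + 1)) := by gcongr; linarith
    _ = _ := by ring

lemma norm_phase (t : ℝ) : ‖Complex.exp (2 * Complex.I * (t : ℂ))‖ = 1 := by
  rw [show 2 * Complex.I * (t : ℂ) = ((2 * t : ℝ) : ℂ) * Complex.I by push_cast; ring]
  exact Complex.norm_exp_ofReal_mul_I _

lemma continuous_symplForm {d : ℕ} : Continuous fun P : PhS d × PhS d => symplForm P.1 P.2 := by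
  unfold symplForm
  fun_prop

lemma stft_alt {d : ℕ} {s : ℝ} (hs : 0 < s) (Φ Ψ : SchwartzMap (PhS d) ℂ)
    (hΨ : ∀ Z, Ψ Z = (starRingEnd ℂ) (Φ Z)) (X Y : PhS d) :
    symplSTFT d Φ (gaS s) X Y = ((Real.pi : ℂ) ^ d)⁻¹ * ∫ W, gaS s W *
      (Complex.exp (2 * Complex.I * (symplForm (Y - W) X : ℂ)) * symplFT d Ψ (Y - W)) := by
  have hpi : (Real.pi : ℂ) ^ d ≠ 0 := pow_ne_zero _ (by exact_mod_cast Real.pi_ne_zero)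
  obtain ⟨a, ha⟩ := exists_schwartz_gaS (d := d) hs
  rw [symplSTFT]
  congr 1
  have e1 : ∀ Z, gaS s Z * (starRingEnd ℂ) (Φ (Z - X)) * Complex.exp (2 * Complex.I * (symplForm Y Z : ℂ)) =
      ∫ W, ((Real.pi : ℂ) ^ d)⁻¹ * (gaS s W * Ψ (Z - X) * (Complex.exp (2 * Complex.I * (symplForm Z W : ℂ)) *
        Complex.exp (2 * Complex.I * (symplForm Y Z : ℂ)))) := by
    intro Z
    conv_lhs => rw [← symplFT_gaS hs]
    rw [symplFT, ← hΨ, integral_const_mul, mul_assoc, mul_assoc]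
    congr 1
    rw [← integral_mul_const]
    congr 1
    funext W
    ring
  simp_rw [e1]
  have hcσ := continuous_symplForm (d := d)
  have hint : Integrable (Function.uncurry fun Z W : PhS d => ((Real.pi : ℂ) ^ d)⁻¹ * (gaS s W * Ψ (Z - X) * (Complex.exp (2 * Complex.I * (symplForm Z W : ℂ)) *
        Complex.exp (2 * Complex.I * (symplForm Y Z : ℂ))))) (volume.prod volume) := by
    have h1 : Integrable (fun Z => Ψ (Z - X)) := (Ψ.integrable (μ := volume)).comp_sub_right X
    have h2 : Integrable (gaS (d := d) s) := by rw [← ha]; exact a.integrable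
    have h3 := h1.mul_prod h2
    have cσ1 : Continuous fun P : PhS d × PhS d => symplForm Y P.1 := hcσ.comp (by fun_prop : Continuous fun P : PhS d × PhS d => (Y, P.1))
    refine Integrable.const_mul (Integrable.mono h3 ?_ (Eventually.of_forall fun P => ?_)) _
    · have c1 : Continuous (gaS (d := d) s) := by rw [← ha]; exact a.continuous
      have c2 := Ψ.continuous
      apply Continuous.aestronglyMeasurable
      fun_prop
    · rw [norm_mul, norm_mul (Complex.exp _), norm_phase, norm_phase, mul_one, mul_one, mul_comm]
  rw [integral_integral_swap hint]
  congr 1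
  funext W
  have e2 : ∀ Z, ((Real.pi : ℂ) ^ d)⁻¹ * (gaS s W * Ψ (Z - X) * (Complex.exp (2 * Complex.I * (symplForm Z W : ℂ)) *
        Complex.exp (2 * Complex.I * (symplForm Y Z : ℂ)))) =
      gaS s W * (((Real.pi : ℂ) ^ d)⁻¹ * (Ψ (Z - X) * Complex.exp (2 * Complex.I * (symplForm (Y - W) Z : ℂ)))) := by
    intro Z
    rw [← Complex.exp_add]
    have : 2 * Complex.I * (symplForm Z W : ℂ) + 2 * Complex.I * (symplForm Y Z : ℂ) =
        2 * Complex.I * (symplForm (Y - W) Z : ℂ) := by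
      rw [← mul_add, ← Complex.ofReal_add]
      congr 2
      simp only [symplForm, Prod.fst_sub, Prod.snd_sub, inner_sub_left, inner_sub_right]
      rw [real_inner_comm Z.2 W.1]
      ring
    rw [this]
    ring
  simp_rw [e2]
  rw [integral_const_mul, integral_const_mul, ← integral_add_right_eq_self (μ := volume) _ X]
  congr 1
  rw [symplFT, mul_left_comm]
  congr 1
  rw [← integral_const_mul]
  congr 1
  funext Z
  rw [add_sub_cancel_right, mul_left_comm, ← Complex.exp_add, ← mul_add, ← Complex.ofReal_add]
  congr 4
  simp only [symplForm, Prod.fst_add, Prod.snd_add, inner_add_left, inner_add_right]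
  ring

lemma stft_bound (d N : ℕ) (hN : d < N) (Φ : SchwartzMap (PhS d) ℂ) : ∃ K : ℝ, 0 < K ∧
    ∀ s : ℝ, 1 ≤ s → ∀ X Y : PhS d,
      ‖symplSTFT d Φ (gaS s) X Y‖ ≤ K * (s ^ d)⁻¹ * wt N s X * wt N s Y := by
  obtain ⟨Ψ, hΨ⟩ := exists_conj d Φ
  obtain ⟨_, _, H⟩ := symplFT_props d
  obtain ⟨g, hg, -⟩ := H Ψ
  obtain ⟨K1, hK1, h1⟩ := schwartz_decay Φ (3 * (N * 2))
  obtain ⟨K2, hK2, h2⟩ := schwartz_decay g (3 * (N * 2))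
  obtain ⟨L1, hL1, b1⟩ := conv_bound d (N * 2) (by omega) K1 hK1
  obtain ⟨L2, hL2, b2⟩ := conv_bound d (N * 2) (by omega) K2 hK2
  set L := max L1 L2
  have hL : 0 < L := lt_max_of_lt_left hL1
  set P := ((Real.pi ^ d)⁻¹ : ℝ) with hP
  have hP0 : 0 < P := by positivity
  have hPn : ‖((Real.pi : ℂ) ^ d)⁻¹‖ = P := by
    rw [norm_inv, norm_pow, Complex.norm_real, Real.norm_of_nonneg Real.pi_pos.le]
  refine ⟨P * L, by positivity, fun s hs X Y => ?_⟩
  have hs0 : 0 < s := by linarith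
  have hw : ∀ Z : PhS d, 0 < wt N s Z := fun Z => by unfold wt; positivity
  have hw2 : ∀ Z : PhS d, wt (N * 2) s Z = wt N s Z ^ 2 := fun Z => by
    unfold wt; rw [mul_pow, inv_pow, inv_pow, pow_mul, pow_mul]
  have i1 : ‖symplSTFT d Φ (gaS s) X Y‖ ≤ P * (L * (s ^ d)⁻¹ * wt N s X ^ 2) := by
    rw [symplSTFT, norm_mul, hPn]
    gcongr
    rw [← hw2]
    refine (b1 s hs X _ (fun Z => ?_)).trans ?_
    · rw [norm_mul, norm_mul, norm_phase, mul_one, norm_gaS, RCLike.norm_conj]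
      gcongr
      exact h1 _
    · rw [hw2]; gcongr; exact le_max_left _ _
  have i2 : ‖symplSTFT d Φ (gaS s) X Y‖ ≤ P * (L * (s ^ d)⁻¹ * wt N s Y ^ 2) := by
    rw [stft_alt hs0 Φ Ψ hΨ, norm_mul, hPn]
    gcongr
    rw [← hw2]
    refine (b2 s hs Y _ (fun Z => ?_)).trans ?_
    · rw [norm_mul, norm_mul, norm_phase, one_mul, norm_gaS, ← hg, norm_sub_rev]
      gcongr
      exact h2 _
    · rw [hw2]; gcongr; exact le_max_right _ _
  have hx := hw X
  have hy := hw Y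
  refine le_of_sq_le_sq ?_ (by positivity)
  calc _ = ‖symplSTFT d Φ (gaS s) X Y‖ * ‖symplSTFT d Φ (gaS s) X Y‖ := sq _
    _ ≤ (P * (L * (s ^ d)⁻¹ * wt N s X ^ 2)) * (P * (L * (s ^ d)⁻¹ * wt N s Y ^ 2)) := by gcongr
    _ = _ := by ring

lemma lpN_mono {α : Type*} [MeasurableSpace α] {μ : Measure α} (p : ℝ≥0∞) {f g : α → ℝ≥0∞}
    (h : ∀ x, f x ≤ g x) : lpNormENN μ p f ≤ lpNormENN μ p g := by
  unfold lpNormENN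
  split_ifs
  · exact essSup_mono_ae (Eventually.of_forall h)
  · gcongr with x
    exact h x

lemma lpN_const_mul {α : Type*} [MeasurableSpace α] {μ : Measure α} {p : ℝ≥0∞} (hp : 1 ≤ p) {c : ℝ≥0∞}
    (hc : c ≠ ∞) (f : α → ℝ≥0∞) :
    lpNormENN μ p (fun x => c * f x) = c * lpNormENN μ p f := by
  unfold lpNormENN
  split_ifs with h
  · exact ENNReal.essSup_const_mul
  · have hp0 : 0 < p.toReal := ENNReal.toReal_pos (by positivity) h
    simp_rw [ENNReal.mul_rpow_of_nonneg _ _ hp0.le]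
    rw [lintegral_const_mul' _ _ (ENNReal.rpow_ne_top_of_nonneg hp0.le hc),
      ENNReal.mul_rpow_of_nonneg _ _ (by positivity), ← ENNReal.rpow_mul, mul_one_div_cancel hp0.ne',
      ENNReal.rpow_one]

lemma lpN_holder_top {α : Type*} [MeasurableSpace α] {μ : Measure α}
    (f : α → ℝ≥0∞) {g : α → ℝ≥0∞} (hg : Measurable g) : ∫⁻ x, f x * g x ∂μ ≤ lpNormENN μ ∞ f * lpNormENN μ 1 g := by
  by_cases h : essSup f μ = ∞
  · by_cases h0 : ∫⁻ x, g x ∂μ = 0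
    · have hz := (lintegral_eq_zero_iff hg).1 h0
      have h2 : ∫⁻ x, f x * g x ∂μ = 0 := by
        rw [← lintegral_zero (μ := μ)]
        refine lintegral_congr_ae ?_
        filter_upwards [hz] with x hx
        simp [hx]
      rw [h2]
      exact zero_le
    · simp [lpNormENN, h, h0]
  · simp only [lpNormENN, if_true, ENNReal.one_ne_top, if_false, ENNReal.toReal_one, ENNReal.rpow_one,
      div_one]
    rw [← lintegral_const_mul' _ _ h]
    refine lintegral_mono_ae ?_
    filter_upwards [ENNReal.ae_le_essSup (μ := μ) f] with x hx
    gcongr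

lemma lpN_holder {α : Type*} [MeasurableSpace α] {μ : Measure α} {p q : ℝ≥0∞}
    (hpq : p⁻¹ + q⁻¹ = 1) {f g : α → ℝ≥0∞} (hf : Measurable f) (hg : Measurable g) :
    ∫⁻ x, f x * g x ∂μ ≤ lpNormENN μ p f * lpNormENN μ q g := by
  by_cases h1 : p = ∞
  · subst h1
    have : q = 1 := by simpa using hpq
    subst this
    exact lpN_holder_top f hg
  by_cases h2 : q = ∞
  · subst h2
    have : p = 1 := by simpa using hpq
    subst this
    rw [mul_comm]
    simp_rw [mul_comm (f _)]
    exact lpN_holder_top g hf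
  have hc : p.toReal.HolderConjugate q.toReal := by
    have : ENNReal.HolderConjugate p q := ⟨by simpa using hpq⟩
    refine ENNReal.HolderConjugate.toReal_of_ne_top h1 h2
  unfold lpNormENN
  rw [if_neg h1, if_neg h2]
  exact ENNReal.lintegral_mul_le_Lp_mul_Lq μ hc hf.aemeasurable hg.aemeasurable

lemma wt_pos {d N : ℕ} {s : ℝ} (hs : 0 < s) (X : PhS d) : 0 < wt N s X := by unfold wt; positivity

lemma wt_cont {d N : ℕ} {s : ℝ} (hs : 0 < s) : Continuous (wt (d := d) N s) := by
  unfold wt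
  refine Continuous.mul (Continuous.inv₀ (by fun_prop) fun X => by positivity)
    (Continuous.inv₀ (by fun_prop) fun X => by positivity)

lemma wt_le_one {d N : ℕ} {s : ℝ} (hs : 0 < s) (X : PhS d) : wt N s X ≤ 1 := by
  unfold wt
  have h1 : 1 ≤ (1 + ‖X.1‖) ^ N := one_le_pow₀ (by linarith [norm_nonneg X.1])
  have h0 : 0 ≤ s⁻¹ * ‖X.2‖ := by positivity
  have h2 : 1 ≤ (1 + s⁻¹ * ‖X.2‖) ^ N := one_le_pow₀ (by linarith)
  exact mul_le_one₀ (inv_le_one_of_one_le₀ h1) (by positivity) (inv_le_one_of_one_le₀ h2)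

lemma wt_lp (d N : ℕ) (hN : d < N) : ∃ I : ℝ, 0 < I ∧ ∀ s : ℝ, 1 ≤ s → ∀ p : ℝ≥0∞, 1 ≤ p →
    lpNormENN volume p (fun X : PhS d => ENNReal.ofReal (wt N s X)) ≤
      ENNReal.ofReal ((I * s ^ d) ^ rcp p) := by
  let E := EuclideanSpace ℝ (Fin d)
  have hint : Integrable (fun ζ : E => ((1 + ‖ζ‖) ^ N)⁻¹) := by
    have := integrable_one_add_norm (E := E) (μ := volume) (r := N)
      (by rw [finrank_euclideanSpace_fin]; exact_mod_cast hN)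
    refine this.congr (Eventually.of_forall fun x => ?_)
    simp only
    rw [Real.rpow_neg (by positivity), Real.rpow_natCast]
  set I := ∫ ζ : E, ((1 + ‖ζ‖) ^ N)⁻¹ with hI
  have hI0 : 0 ≤ I := integral_nonneg fun ζ => by positivity
  refine ⟨I * I + 1, by positivity, fun s hs p hp => ?_⟩
  have hs0 : 0 < s := by linarith
  unfold lpNormENN
  split_ifs with h
  · subst h
    simp only [rcp, ENNReal.inv_top, ENNReal.toReal_zero, Real.rpow_zero, ENNReal.ofReal_one]
    refine essSup_le_of_ae_le _ (Eventually.of_forall fun X => ?_)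
    simpa using wt_le_one hs0 X
  · have hp1 : 1 ≤ p.toReal := by
      rw [← ENNReal.toReal_one]; exact ENNReal.toReal_mono h hp
    have hint2 : Integrable (fun ζ : E => ((1 + s⁻¹ * ‖ζ‖) ^ N)⁻¹) := by
      have := (integrable_comp_smul_iff volume (fun ζ : E => ((1 + ‖ζ‖) ^ N)⁻¹) (inv_ne_zero hs0.ne')).2 hint
      refine this.congr (Eventually.of_forall fun x => ?_)
      simp only
      rw [norm_smul, Real.norm_of_nonneg (by positivity)]
    have hI2 : ∫ ζ : E, ((1 + s⁻¹ * ‖ζ‖) ^ N)⁻¹ = s ^ d * I := by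
      have := Measure.integral_comp_inv_smul_of_nonneg volume (fun ζ : E => ((1 + ‖ζ‖) ^ N)⁻¹) hs0.le
      rw [finrank_euclideanSpace_fin, smul_eq_mul] at this
      rw [← this]
      congr 1
      funext x
      rw [norm_smul, Real.norm_of_nonneg (by positivity)]
    have hwi : Integrable (wt (d := d) N s) := hint.mul_prod hint2
    have hwI : ∫ X : PhS d, wt N s X = I * (s ^ d * I) := by
      unfold wt
      rw [Measure.volume_eq_prod, integral_prod_mul (fun z : E => ((1 + ‖z‖) ^ N)⁻¹) (fun ζ : E => ((1 + s⁻¹ * ‖ζ‖) ^ N)⁻¹), hI2]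
    have hb : ∫⁻ X : PhS d, ENNReal.ofReal (wt N s X) ^ p.toReal ≤ ENNReal.ofReal ((I * I + 1) * s ^ d) := by
      calc _ ≤ ∫⁻ X : PhS d, ENNReal.ofReal (wt N s X) := by
            refine lintegral_mono fun X => ?_
            refine ENNReal.rpow_le_self_of_le_one ?_ hp1
            simpa using wt_le_one hs0 X
        _ = ENNReal.ofReal (I * (s ^ d * I)) := by
            rw [← hwI, ofReal_integral_eq_lintegral_ofReal hwi (Eventually.of_forall fun X => (wt_pos hs0 X).le)]
        _ ≤ _ := by
            apply ENNReal.ofReal_le_ofReal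
            have : 0 < s ^ d := by positivity
            nlinarith
    calc _ ≤ (ENNReal.ofReal ((I * I + 1) * s ^ d)) ^ (1 / p.toReal) := by gcongr
      _ = _ := by
        rw [ENNReal.ofReal_rpow_of_pos (by positivity), rcp, ENNReal.toReal_inv, one_div]

lemma stft_meas {d : ℕ} (Φ a : SchwartzMap (PhS d) ℂ) :
    Measurable fun P : PhS d × PhS d => ‖symplSTFT d Φ a P.1 P.2‖ := by
  unfold symplSTFT
  have hcσ := continuous_symplForm (d := d)
  have ca : Continuous a := a.continuous
  have cΦ : Continuous Φ := Φ.continuous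
  have cσ1 : Continuous fun P : (PhS d × PhS d) × PhS d => symplForm P.1.2 P.2 :=
    hcσ.comp (by fun_prop : Continuous fun P : (PhS d × PhS d) × PhS d => (P.1.2, P.2))
  have : StronglyMeasurable (Function.uncurry fun (P : PhS d × PhS d) (Z : PhS d) =>
      a Z * (starRingEnd ℂ) (Φ (Z - P.1)) * Complex.exp (2 * Complex.I * (symplForm P.2 Z : ℂ))) := by
    apply Continuous.stronglyMeasurable
    unfold Function.uncurry
    have c2 : Continuous (starRingEnd ℂ) := Complex.continuous_conj
    fun_prop
  have h := this.integral_prod_right (ν := volume)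
  exact (h.const_mul _).norm.measurable

lemma upper_bound {d N : ℕ} (hN : d < N) (Φ : SchwartzMap (PhS d) ℂ) {K s : ℝ} (hK : 0 < K) (hs : 1 ≤ s)
    (hb : ∀ X Y : PhS d, ‖symplSTFT d Φ (gaS s) X Y‖ ≤ K * (s ^ d)⁻¹ * wt N s X * wt N s Y)
    {p q : ℝ≥0∞} (hp : 1 ≤ p) (hq : 1 ≤ q) :
    modNorm d p q (fun _ => 1) Φ (gaS s) ≤ ENNReal.ofReal (K * (s ^ d)⁻¹) *
      lpNormENN volume p (fun X : PhS d => ENNReal.ofReal (wt N s X)) *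
      lpNormENN volume q (fun X : PhS d => ENNReal.ofReal (wt N s X)) := by
  have hs0 : 0 < s := by linarith
  obtain ⟨I, hI, hIb⟩ := wt_lp d N hN
  have hfin : lpNormENN volume p (fun X : PhS d => ENNReal.ofReal (wt N s X)) ≠ ∞ :=
    ne_top_of_le_ne_top ENNReal.ofReal_ne_top (hIb s hs p hp)
  rw [← lpN_const_mul hq (ENNReal.mul_ne_top ENNReal.ofReal_ne_top hfin)]
  refine lpN_mono q fun Y => ?_
  rw [mul_right_comm, ← lpN_const_mul hp (ENNReal.mul_ne_top ENNReal.ofReal_ne_top ENNReal.ofReal_ne_top)]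
  refine lpN_mono p fun X => ?_
  have := (wt_pos (N := N) hs0 X).le
  have := (wt_pos (N := N) hs0 Y).le
  rw [← ENNReal.ofReal_mul (by positivity), ← ENNReal.ofReal_mul (by positivity), mul_one]
  refine ENNReal.ofReal_le_ofReal ((hb X Y).trans_eq (by ring))

lemma meas_sec {α : Type*} [MeasurableSpace α] (f : α → α → ℝ≥0∞)
    (hf : Measurable fun P : α × α => f P.1 P.2) (y : α) : Measurable fun x => f x y :=
  hf.comp (measurable_prodMk_right (y := y))

lemma lower_bound {d N : ℕ} (hN : d < N) (Φ a : SchwartzMap (PhS d) ℂ) {K s : ℝ} (hK : 0 < K) (hs : 1 ≤ s)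
    (hb : ∀ X Y : PhS d, ‖symplSTFT d Φ a X Y‖ ≤ K * (s ^ d)⁻¹ * wt N s X * wt N s Y)
    {p q pc qc : ℝ≥0∞} (hp : 1 ≤ p) (hpc : p⁻¹ + pc⁻¹ = 1) (hqc : q⁻¹ + qc⁻¹ = 1) (hqc1 : 1 ≤ qc) :
    ∫⁻ X, ∫⁻ Y, ENNReal.ofReal (‖symplSTFT d Φ a X Y‖ ^ 2) ≤
      ENNReal.ofReal (K * (s ^ d)⁻¹) *
      lpNormENN volume p (fun X : PhS d => ENNReal.ofReal (wt N s X)) *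
      lpNormENN volume q (fun X : PhS d => ENNReal.ofReal (wt N s X)) *
      modNorm d pc qc (fun _ => 1) Φ a := by
  have hs0 : 0 < s := by linarith
  obtain ⟨I, hI, hIb⟩ := wt_lp d N hN
  have hfin : lpNormENN volume p (fun X : PhS d => ENNReal.ofReal (wt N s X)) ≠ ∞ :=
    ne_top_of_le_ne_top ENNReal.ofReal_ne_top (hIb s hs p hp)
  have hm := stft_meas Φ a
  have hwm : Measurable fun X : PhS d => ENNReal.ofReal (wt N s X) := (wt_cont hs0).measurable.ennreal_ofReal
  have hVm : Measurable fun P : PhS d × PhS d => ENNReal.ofReal ‖symplSTFT d Φ a P.1 P.2‖ := hm.ennreal_ofReal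
  rw [lintegral_lintegral_swap (hm.pow_const 2).ennreal_ofReal.aemeasurable]
  set H : PhS d → ℝ≥0∞ := fun Y => ∫⁻ X, ENNReal.ofReal (wt N s X) * ENNReal.ofReal ‖symplSTFT d Φ a X Y‖ with hH
  have hHm : Measurable H := by
    refine Measurable.lintegral_prod_left' (f := fun P : PhS d × PhS d => ENNReal.ofReal (wt N s P.1) * ENNReal.ofReal ‖symplSTFT d Φ a P.1 P.2‖) ?_
    exact (hwm.comp measurable_fst).mul hVm
  have h1 : ∫⁻ Y, ∫⁻ X, ENNReal.ofReal (‖symplSTFT d Φ a X Y‖ ^ 2) ≤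
      ENNReal.ofReal (K * (s ^ d)⁻¹) * ∫⁻ Y, ENNReal.ofReal (wt N s Y) * H Y := by
    rw [← lintegral_const_mul' _ _ ENNReal.ofReal_ne_top]
    refine lintegral_mono fun Y => ?_
    simp only [hH]
    rw [← lintegral_const_mul' _ _ ENNReal.ofReal_ne_top, ← lintegral_const_mul' _ _ ENNReal.ofReal_ne_top]
    refine lintegral_mono fun X => ?_
    have := (wt_pos (N := N) hs0 X).le
    have := (wt_pos (N := N) hs0 Y).le
    simp only
    rw [← ENNReal.ofReal_mul (by positivity), ← ENNReal.ofReal_mul (by positivity), ← ENNReal.ofReal_mul (by positivity)]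
    apply ENNReal.ofReal_le_ofReal
    rw [sq]
    calc _ ≤ (K * (s ^ d)⁻¹ * wt N s X * wt N s Y) * ‖symplSTFT d Φ a X Y‖ := by gcongr; exact hb X Y
      _ = _ := by ring
  clear_value H
  have hY : ∀ Y, H Y ≤ lpNormENN volume p (fun X : PhS d => ENNReal.ofReal (wt N s X)) *
      lpNormENN volume pc (fun X : PhS d => ENNReal.ofReal (‖symplSTFT d Φ a X Y‖ * 1)) := by
    intro Y
    have hVY : Measurable fun X : PhS d => ENNReal.ofReal ‖symplSTFT d Φ a X Y‖ :=
      meas_sec (fun X Y => ENNReal.ofReal ‖symplSTFT d Φ a X Y‖) hVm Y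
    have := lpN_holder (μ := volume) hpc hwm hVY
    simp only [hH, mul_one]
    exact this
  have h2 : lpNormENN volume qc H ≤ lpNormENN volume p (fun X : PhS d => ENNReal.ofReal (wt N s X)) *
      modNorm d pc qc (fun _ => 1) Φ a := by
    rw [modNorm, ← lpN_const_mul hqc1 hfin]
    exact lpN_mono _ hY
  have h3 := lpN_holder (μ := volume) hqc hwm hHm
  have h4 := h3.trans (mul_le_mul' le_rfl h2)
  have h5 := h1.trans (mul_le_mul' le_rfl h4)
  refine h5.trans (le_of_eq ?_)
  ring

lemma modNorm_const_mul {d : ℕ} (Φ a : PhS d → ℂ) (c : ℂ) {p q : ℝ≥0∞} (hp : 1 ≤ p) (hq : 1 ≤ q) :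
    modNorm d p q (fun _ => 1) Φ (fun X => c * a X) =
      ENNReal.ofReal ‖c‖ * modNorm d p q (fun _ => 1) Φ a := by
  unfold modNorm
  rw [← lpN_const_mul hq ENNReal.ofReal_ne_top]
  congr 1
  funext Y
  rw [← lpN_const_mul hp ENNReal.ofReal_ne_top]
  congr 1
  funext X
  have : symplSTFT d Φ (fun X => c * a X) X Y = c * symplSTFT d Φ a X Y := by
    unfold symplSTFT
    rw [mul_left_comm, ← integral_const_mul c]
    congr 2
    funext Z
    ring
  rw [this, norm_mul, mul_assoc, ENNReal.ofReal_mul (norm_nonneg _)]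

lemma gaS_l2 {d : ℕ} {s : ℝ} (hs : 0 < s) : ∫ Y : PhS d, ‖gaS s Y‖ ^ 2 = (Real.pi / 2) ^ d := by
  have := gauss_int (d := d) hs two_pos 0
  have h0 : ∀ Y : PhS d, symplForm 0 Y = 0 := fun Y => by simp [symplForm]
  have h1 : Qs s (0 : PhS d) = 0 := by simp [Qs]
  simp only [h0, h1, Complex.ofReal_zero, mul_zero, Complex.exp_zero, mul_one, neg_zero] at this
  have h2 : ∀ Y : PhS d, Complex.exp (((-(2 * Qs s Y) : ℝ)) : ℂ) = ((‖gaS s Y‖ ^ 2 : ℝ) : ℂ) := by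
    intro Y
    rw [norm_gaS, ← Real.exp_nat_mul, ← Complex.ofReal_exp]
    congr 2
    push_cast
    ring
  simp_rw [h2] at this
  have h3 := integral_complex_ofReal (μ := volume) (f := fun Y : PhS d => ‖gaS s Y‖ ^ 2)
  replace this := h3.symm.trans this
  exact_mod_cast this

lemma schwartz_l2_pos {d : ℕ} (Φ : SchwartzMap (PhS d) ℂ) (hΦ : Φ ≠ 0) : 0 < ∫ Y, ‖Φ Y‖ ^ 2 := by
  refine lt_of_le_of_ne (integral_nonneg fun Y => by positivity) fun h => hΦ ?_
  have h1 := (integral_eq_zero_iff_of_nonneg (fun Y => by positivity)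
    ((Φ.memLp 2 volume).integrable_norm_pow (by norm_num))).1 h.symm
  have c : Continuous fun Y => ‖Φ Y‖ ^ 2 := by have := Φ.continuous; fun_prop
  have h2 := (Continuous.ae_eq_iff_eq volume c continuous_const).1 h1
  ext Y
  have h3 : ‖Φ Y‖ ^ 2 = 0 := congrFun h2 Y
  simpa using h3

end Helpers

noncomputable section

/-- Lemma (necessity, mixed Gaussians): if the Weyl product satisfies the
unweighted modulation space bound, then
`3 ≤ 1/q₀ + 1/q₁ + 1/q₂ + 1/p₀ + 1/p₁ + 1/p₂`. -/
theorem weyl_product_necessary_sum_condition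
    (d : ℕ) (hd : 1 ≤ d)
    (p q pc qc : Fin 3 → ℝ≥0∞)
    (hp : ∀ j, 1 ≤ p j) (hq : ∀ j, 1 ≤ q j)
    (hpc : ∀ j, (p j)⁻¹ + (pc j)⁻¹ = 1) (hqc : ∀ j, (q j)⁻¹ + (qc j)⁻¹ = 1)
    (Φ : SchwartzMap (PhS d) ℂ) (hΦ : Φ ≠ 0)
    (C : ℝ) (hC : 0 < C)
    (hbound : ∀ a b : SchwartzMap (PhS d) ℂ,
      modNorm d (pc 0) (qc 0) (fun _ => 1) (⇑Φ) (weylProd d (⇑a) (⇑b)) ≤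
        ENNReal.ofReal C * modNorm d (p 1) (q 1) (fun _ => 1) (⇑Φ) (⇑a) *
          modNorm d (p 2) (q 2) (fun _ => 1) (⇑Φ) (⇑b)) :
    3 ≤ rcp (q 0) + rcp (q 1) + rcp (q 2) + rcp (p 0) + rcp (p 1) + rcp (p 2) := by
  by_contra! hlt
  obtain ⟨κ, hκ, hmoy⟩ := moyal d Φ
  have hN : d < d + 1 := Nat.lt_succ_self d
  obtain ⟨K, hK, hKb⟩ := stft_bound d (d + 1) hN Φ
  obtain ⟨I, hI, hIb⟩ := wt_lp d (d + 1) hN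
  have hone : ∀ x y : ℝ≥0∞, x⁻¹ + y⁻¹ = 1 → 1 ≤ y := by
    intro x y h
    rw [← ENNReal.inv_le_one, ← h]
    exact le_add_self
  have hΦ2 := schwartz_l2_pos Φ hΦ
  set S := rcp (q 0) + rcp (q 1) + rcp (q 2) + rcp (p 0) + rcp (p 1) + rcp (p 2) with hS
  set A := κ * (Real.pi / 2) ^ d * ∫ Y, ‖Φ Y‖ ^ 2 with hA
  have hA0 : 0 < A := by positivity
  set c := 2 ^ d * C * K ^ 3 * I ^ S with hc
  have main : ∀ s : ℝ, 1 ≤ s → A ≤ c * (s ^ d) ^ (-(3 - S)) := by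
    intro s hs
    have hs0 : 0 < s := by linarith
    obtain ⟨a, ha⟩ := exists_schwartz_gaS (d := d) hs0
    set t := s ^ d with ht
    have ht0 : 0 < t := by positivity
    let U : Fin 3 → ℝ := fun j => K * t⁻¹ * (I * t) ^ rcp (p j) * (I * t) ^ rcp (q j)
    have hU0 : ∀ j, 0 ≤ U j := fun j => by positivity
    have hUb : ∀ j, ENNReal.ofReal (K * t⁻¹) *
      lpNormENN volume (p j) (fun X : PhS d => ENNReal.ofReal (wt (d + 1) s X)) *
      lpNormENN volume (q j) (fun X : PhS d => ENNReal.ofReal (wt (d + 1) s X)) ≤ ENNReal.ofReal (U j) := by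
      intro j
      have e : ENNReal.ofReal (U j) = ENNReal.ofReal (K * t⁻¹) * ENNReal.ofReal ((I * t) ^ rcp (p j)) *
          ENNReal.ofReal ((I * t) ^ rcp (q j)) := by
        rw [← ENNReal.ofReal_mul (by positivity), ← ENNReal.ofReal_mul (by positivity)]
      rw [e]
      exact mul_le_mul' (mul_le_mul' le_rfl (hIb s hs _ (hp j))) (hIb s hs _ (hq j))
    have hup : ∀ j, modNorm d (p j) (q j) (fun _ => 1) Φ a ≤ ENNReal.ofReal (U j) := fun j => by
      rw [ha]
      exact (upper_bound hN Φ hK hs (hKb s hs) (hp j) (hq j)).trans (hUb j)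
    have hlow := lower_bound hN Φ a hK hs (by rw [ha]; exact hKb s hs) (hp 0) (hpc 0) (hqc 0) (hone _ _ (hqc 0))
    have hl2 : ∫ Y, ‖a Y‖ ^ 2 = (Real.pi / 2) ^ d := by rw [ha]; exact gaS_l2 hs0
    rw [hmoy a, hl2] at hlow
    have hw := hbound a a
    have hwe : weylProd d a a = fun X => ((2 : ℂ) ^ d)⁻¹ * a X := by rw [ha]; exact weyl_gaS hs0
    rw [hwe, modNorm_const_mul _ _ _ (hone _ _ (hpc 0)) (hone _ _ (hqc 0))] at hw
    have hn : ‖((2 : ℂ) ^ d)⁻¹‖ = (2 ^ d)⁻¹ := by simp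
    rw [hn] at hw
    have hw2 : modNorm d (pc 0) (qc 0) (fun _ => 1) Φ a ≤ ENNReal.ofReal (2 ^ d * C * U 1 * U 2) := by
      have h1 : modNorm d (pc 0) (qc 0) (fun _ => 1) Φ a = ENNReal.ofReal (2 ^ d) *
          (ENNReal.ofReal (2 ^ d)⁻¹ * modNorm d (pc 0) (qc 0) (fun _ => 1) Φ a) := by
        rw [← mul_assoc, ← ENNReal.ofReal_mul (by positivity), mul_inv_cancel₀ (by positivity), ENNReal.ofReal_one, one_mul]
      rw [h1]
      calc _ ≤ ENNReal.ofReal (2 ^ d) * (ENNReal.ofReal C * ENNReal.ofReal (U 1) * ENNReal.ofReal (U 2)) := by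
            exact mul_le_mul' le_rfl (hw.trans (mul_le_mul' (mul_le_mul' le_rfl (hup 1)) (hup 2)))
        _ = _ := by
            rw [← ENNReal.ofReal_mul hC.le, ← ENNReal.ofReal_mul (mul_nonneg hC.le (hU0 1)), ← ENNReal.ofReal_mul (by positivity)]
            congr 1
            ring
    have hfin : ENNReal.ofReal A ≤ ENNReal.ofReal (U 0 * (2 ^ d * C * U 1 * U 2)) := by
      rw [ENNReal.ofReal_mul (hU0 0)]
      exact hlow.trans (mul_le_mul' (hUb 0) hw2)
    have h3 : 0 ≤ U 0 * (2 ^ d * C * U 1 * U 2) :=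
      mul_nonneg (hU0 0) (mul_nonneg (mul_nonneg (by positivity) (hU0 1)) (hU0 2))
    rw [ENNReal.ofReal_le_ofReal_iff h3] at hfin
    refine hfin.trans_eq ?_
    have hIt : (I * t) ^ S = (I * t) ^ rcp (q 0) * (I * t) ^ rcp (q 1) * (I * t) ^ rcp (q 2) *
        (I * t) ^ rcp (p 0) * (I * t) ^ rcp (p 1) * (I * t) ^ rcp (p 2) := by
      have hIt0 : 0 < I * t := by positivity
      rw [hS, Real.rpow_add hIt0, Real.rpow_add hIt0, Real.rpow_add hIt0, Real.rpow_add hIt0, Real.rpow_add hIt0]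
    have ht3 : t ^ (-(3 - S)) = t⁻¹ ^ 3 * t ^ S := by
      rw [neg_sub, Real.rpow_sub ht0, inv_pow, div_eq_mul_inv, mul_comm]
      norm_cast
    rw [hc, ht3]
    rw [Real.mul_rpow hI.le ht0.le] at hIt
    calc _ = 2 ^ d * C * K ^ 3 * t⁻¹ ^ 3 * ((I * t) ^ rcp (q 0) * (I * t) ^ rcp (q 1) * (I * t) ^ rcp (q 2) *
        (I * t) ^ rcp (p 0) * (I * t) ^ rcp (p 1) * (I * t) ^ rcp (p 2)) := by simp only [U]; ring
      _ = _ := by rw [← hIt]; ring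
  have hlim : Tendsto (fun s : ℝ => c * (s ^ d) ^ (-(3 - S))) atTop (nhds (c * 0)) :=
    (((tendsto_rpow_neg_atTop (by linarith : 0 < 3 - S)).comp (tendsto_pow_atTop (by omega : d ≠ 0)))).const_mul c
  have : A ≤ c * 0 := ge_of_tendsto hlim ((eventually_ge_atTop 1).mono main)
  linarith

end
end

section
/- Let d ≥ 1 and λ > 0, and let a_λ be the Schwartz function on ℝ^{2d} given by a_λ(X) = e^{−λ|X|²}. Then for every X ∈ ℝ^{2d}: (a_λ # a_λ)(X) = (1+λ²)^{−d} exp( −2λ|X|² / (1+λ²) ). -/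
open MeasureTheory Filter
open scoped ENNReal RealInnerProductSpace BigOperators

noncomputable section

lemma gaux {d : ℕ} (b : ℝ) (hb : 0 < b) (c e : ℂ) (w u : EuclideanSpace ℝ (Fin d)) :
    ∫ v : EuclideanSpace ℝ (Fin d),
      Complex.exp (-(b:ℂ) * (‖v‖:ℂ) ^ 2 + c * (⟪w, v⟫ : ℝ) + e * (⟪u, v⟫ : ℝ)) =
      (Real.pi / (b:ℂ)) ^ ((d:ℂ) / 2) *
        Complex.exp ((c ^ 2 * (‖w‖:ℂ) ^ 2 + 2 * c * e * (⟪w, u⟫ : ℝ) + e ^ 2 * (‖u‖:ℂ) ^ 2)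
          / (4 * b)) := by
  rw [← (PiLp.volume_preserving_toLp (Fin d)).integral_comp
    (MeasurableEquiv.toLp 2 _).measurableEmbedding]
  have hn : ∀ v : EuclideanSpace ℝ (Fin d), (‖v‖:ℂ) ^ 2 = ∑ i, (v i : ℂ) ^ 2 := by
    intro v
    rw [← Complex.ofReal_pow, EuclideanSpace.real_norm_sq_eq]
    push_cast
    rfl
  have hi : ∀ v y : EuclideanSpace ℝ (Fin d), ((⟪v, y⟫ : ℝ) : ℂ) = ∑ i, (v i : ℂ) * (y i : ℂ) := by
    intro v y
    rw [PiLp.inner_apply]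
    push_cast
    refine Finset.sum_congr rfl fun i _ => ?_
    simp [mul_comm]
  have := GaussianFourier.integral_cexp_neg_mul_sum_add (b := (b:ℂ)) (by simpa using hb)
    (fun i : Fin d => c * w i + e * u i)
  rw [Fintype.card_fin] at this
  simp only [hn, hi]
  have e2 : c ^ 2 * ∑ i, (w i : ℂ) ^ 2 + 2 * c * e * ∑ i, (w i : ℂ) * (u i : ℂ)
      + e ^ 2 * ∑ i, (u i : ℂ) ^ 2 = ∑ i, (c * (w i : ℂ) + e * (u i : ℂ)) ^ 2 := by
    simp only [Finset.mul_sum]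
    rw [← Finset.sum_add_distrib, ← Finset.sum_add_distrib]
    refine Finset.sum_congr rfl fun i _ => ?_
    ring
  rw [e2]
  refine Eq.trans (integral_congr_ae (Eventually.of_forall fun v => ?_)) this
  change Complex.exp (-(b:ℂ) * ∑ i, (v i : ℂ) ^ 2 + c * ∑ i, (w i : ℂ) * (v i : ℂ)
    + e * ∑ i, (u i : ℂ) * (v i : ℂ)) = _
  congr 1
  rw [add_assoc]
  congr 1
  rw [Finset.mul_sum, Finset.mul_sum, ← Finset.sum_add_distrib]
  refine Finset.sum_congr rfl fun i _ => ?_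
  ring

/-- Gaussian integral on phase space. -/
lemma gaux2 {d : ℕ} (b : ℝ) (hb : 0 < b) (c : ℂ) (X : PhS d) :
    ∫ Y : PhS d, Complex.exp (-(b:ℂ) * ((‖Y.1‖:ℂ) ^ 2 + (‖Y.2‖:ℂ) ^ 2)
      + c * ((⟪X.1, Y.1⟫ : ℝ) + (⟪X.2, Y.2⟫ : ℝ)) + 2 * Complex.I * (symplForm X Y : ℂ)) =
      (Real.pi / (b:ℂ)) ^ d *
        Complex.exp ((c ^ 2 - 4) * ((‖X.1‖:ℂ) ^ 2 + (‖X.2‖:ℂ) ^ 2) / (4 * b)) := by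
  have h1 := gaux b hb c (2 * Complex.I) X.1 X.2
  have h2 := gaux b hb c (-(2 * Complex.I)) X.2 X.1
  have hs : (Real.pi / (b:ℂ)) ^ d =
      (Real.pi / (b:ℂ)) ^ ((d:ℂ) / 2) * (Real.pi / (b:ℂ)) ^ ((d:ℂ) / 2) := by
    rw [← Complex.cpow_add _ _ (by
      have := Real.pi_ne_zero
      have := hb.ne'
      simp [*])]
    rw [add_halves, Complex.cpow_natCast]
  have hI := Complex.I_sq
  calc _ = ∫ Y : PhS d, Complex.exp (-(b:ℂ) * (‖Y.1‖:ℂ) ^ 2 + c * (⟪X.1, Y.1⟫ : ℝ)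
          + (2 * Complex.I) * (⟪X.2, Y.1⟫ : ℝ)) *
        Complex.exp (-(b:ℂ) * (‖Y.2‖:ℂ) ^ 2 + c * (⟪X.2, Y.2⟫ : ℝ)
          + (-(2 * Complex.I)) * (⟪X.1, Y.2⟫ : ℝ)) := by
        refine integral_congr_ae (Eventually.of_forall fun Y => ?_)
        simp only
        rw [← Complex.exp_add]
        congr 1
        rw [symplForm, real_inner_comm X.2 Y.1]
        push_cast
        ring
    _ = _ := by
        rw [Measure.volume_eq_prod, integral_prod_mul
          (f := fun y : EuclideanSpace ℝ (Fin d) => Complex.exp (-(b:ℂ) * (‖y‖:ℂ) ^ 2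
            + c * (⟪X.1, y⟫ : ℝ) + (2 * Complex.I) * (⟪X.2, y⟫ : ℝ)))
          (g := fun y : EuclideanSpace ℝ (Fin d) => Complex.exp (-(b:ℂ) * (‖y‖:ℂ) ^ 2
            + c * (⟪X.2, y⟫ : ℝ) + (-(2 * Complex.I)) * (⟪X.1, y⟫ : ℝ))), h1, h2, hs]
        rw [mul_mul_mul_comm, ← Complex.exp_add, real_inner_comm X.1 X.2]
        congr 2
        rw [← add_div]
        congr 1
        linear_combination (4 * ((‖X.1‖:ℂ) ^ 2 + (‖X.2‖:ℂ) ^ 2)) * hI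

lemma symplFT_gauss {d : ℕ} (lam : ℝ) (hlam : 0 < lam) (X : PhS d) :
    symplFT d (fun Y => ((Real.exp (-lam * (‖Y.1‖ ^ 2 + ‖Y.2‖ ^ 2)) : ℝ) : ℂ)) X =
      ((lam:ℂ) ^ d)⁻¹ * Complex.exp (-((‖X.1‖:ℂ) ^ 2 + (‖X.2‖:ℂ) ^ 2) / lam) := by
  have h := gaux2 lam hlam 0 X
  have hl : (lam:ℂ) ≠ 0 := by exact_mod_cast hlam.ne'
  have hp : (Real.pi:ℂ) ≠ 0 := by exact_mod_cast Real.pi_ne_zero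
  unfold symplFT
  have : ∀ Y : PhS d, ((Real.exp (-lam * (‖Y.1‖ ^ 2 + ‖Y.2‖ ^ 2)) : ℝ) : ℂ) *
      Complex.exp (2 * Complex.I * (symplForm X Y : ℂ)) =
      Complex.exp (-(lam:ℂ) * ((‖Y.1‖:ℂ) ^ 2 + (‖Y.2‖:ℂ) ^ 2)
      + 0 * ((⟪X.1, Y.1⟫ : ℝ) + (⟪X.2, Y.2⟫ : ℝ)) + 2 * Complex.I * (symplForm X Y : ℂ)) := by
    intro Y
    rw [Complex.ofReal_exp, ← Complex.exp_add]
    congr 1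
    push_cast
    ring
  simp only [this]
  rw [h, div_pow, ← mul_assoc]
  congr 1
  · field_simp
  · congr 1
    field_simp
    ring

/-- The Weyl product of the Gaussian `a_λ(X) = e^{-λ|X|²}` with itself:
`(a_λ # a_λ)(X) = (1+λ²)^{-d} exp(-2λ|X|²/(1+λ²))`. -/
theorem weylProd_gaussian
    (d : ℕ) (hd : 1 ≤ d) (lam : ℝ) (hlam : 0 < lam) (X : PhS d) :
    weylProd d
        (fun Y => ((Real.exp (-lam * (‖Y.1‖ ^ 2 + ‖Y.2‖ ^ 2)) : ℝ) : ℂ))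
        (fun Y => ((Real.exp (-lam * (‖Y.1‖ ^ 2 + ‖Y.2‖ ^ 2)) : ℝ) : ℂ)) X =
      ((((1 + lam ^ 2) ^ d)⁻¹ *
        Real.exp (-(2 * lam * (‖X.1‖ ^ 2 + ‖X.2‖ ^ 2)) / (1 + lam ^ 2)) : ℝ) : ℂ) := by
  have hl : (lam:ℂ) ≠ 0 := by exact_mod_cast hlam.ne'
  have hp : (Real.pi:ℂ) ≠ 0 := by exact_mod_cast Real.pi_ne_zero
  have hq : (1 + (lam:ℂ) ^ 2) ≠ 0 := by
    have : (1 + lam ^ 2 : ℝ) ≠ 0 := by positivity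
    exact_mod_cast this
  have hb : 0 < lam + lam⁻¹ := by positivity
  have hbe : (lam:ℂ) + (lam:ℂ)⁻¹ = (1 + (lam:ℂ) ^ 2) / lam := by
    field_simp
    ring
  have h := gaux2 (lam + lam⁻¹) hb (2 * lam) X
  unfold weylProd twistConv
  simp only [symplFT_gauss lam hlam]
  have hc : (((2 * Real.pi) ^ (-(d : ℝ) / 2) : ℝ) : ℂ) *
      (((2 / Real.pi) ^ ((d : ℝ) / 2) : ℝ) : ℂ) = ((Real.pi:ℂ) ^ d)⁻¹ := by
    have hpi := Real.pi_pos
    rw [← Complex.ofReal_mul, ← Complex.ofReal_pow, ← Complex.ofReal_inv]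
    congr 1
    rw [neg_div, Real.rpow_neg (by positivity), ← Real.inv_rpow (by positivity),
      ← Real.mul_rpow (by positivity) (by positivity)]
    have : (2 * Real.pi)⁻¹ * (2 / Real.pi) = (Real.pi⁻¹) ^ (2:ℝ) := by
      rw [Real.rpow_two]
      field_simp
    rw [this, ← Real.rpow_mul (by positivity), mul_div_cancel₀ _ (by norm_num),
      Real.rpow_natCast, inv_pow]
  have : ∀ Y : PhS d, ((Real.exp (-lam * (‖(X - Y).1‖ ^ 2 + ‖(X - Y).2‖ ^ 2)) : ℝ) : ℂ) *
      (((lam:ℂ) ^ d)⁻¹ * Complex.exp (-((‖Y.1‖:ℂ) ^ 2 + (‖Y.2‖:ℂ) ^ 2) / lam)) *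
      Complex.exp (2 * Complex.I * (symplForm X Y : ℂ)) =
      (((lam:ℂ) ^ d)⁻¹ * Complex.exp (-lam * ((‖X.1‖:ℂ) ^ 2 + (‖X.2‖:ℂ) ^ 2))) *
      Complex.exp (-((lam + lam⁻¹ : ℝ):ℂ) * ((‖Y.1‖:ℂ) ^ 2 + (‖Y.2‖:ℂ) ^ 2)
      + 2 * lam * ((⟪X.1, Y.1⟫ : ℝ) + (⟪X.2, Y.2⟫ : ℝ))
      + 2 * Complex.I * (symplForm X Y : ℂ)) := by
    intro Y
    rw [mul_left_comm, mul_assoc, mul_assoc, Complex.ofReal_exp, ← Complex.exp_add,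
      ← Complex.exp_add, mul_assoc (((lam:ℂ) ^ d)⁻¹), ← Complex.exp_add]
    congr 2
    rw [Prod.fst_sub, Prod.snd_sub, norm_sub_sq_real, norm_sub_sq_real]
    push_cast
    ring
  simp only [this]
  rw [integral_const_mul, h, ← mul_assoc, hc]
  push_cast
  rw [hbe]
  have e1 : -(2 * (lam:ℂ) * ((‖X.1‖:ℂ) ^ 2 + (‖X.2‖:ℂ) ^ 2)) / (1 + (lam:ℂ) ^ 2) =
      -lam * ((‖X.1‖:ℂ) ^ 2 + (‖X.2‖:ℂ) ^ 2) +
      ((2 * (lam:ℂ)) ^ 2 - 4) * ((‖X.1‖:ℂ) ^ 2 + (‖X.2‖:ℂ) ^ 2)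
        / (4 * ((1 + (lam:ℂ) ^ 2) / lam)) := by
    field_simp
    ring
  rw [e1, Complex.exp_add, div_pow, div_pow]
  field_simp

end
end

section
/- Let N ≥ 2 and p_j, q_j ∈ [1,∞] for j = 0,1,…,N. Then the condition max(R_N(q′), 0) ≤ min_{j=0,…,N} ( 1/p_j , 1/p_j′ , 1/q_j , 1/q_j′ , R_N(p) ) holds if and only if there exist θ ∈ [0,1] and exponents r_j, s_j ∈ [1,∞] for j = 0,…,N such that R_N(s′) ≤ 0 ≤ R_N(r) and, for every j, 1/p_j = (1−θ)/r_j + θ/2 and 1/q_j = (1−θ)/s_j + θ/2. -/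
open scoped ENNReal BigOperators

noncomputable section

theorem rcp_inv_ofReal_aux (x : ℝ) (h : 0 ≤ x) : rcp (ENNReal.ofReal x)⁻¹ = x := by
  simp [rcp, h]

theorem one_le_inv_ofReal_aux (x : ℝ) (h : x ≤ 1) : 1 ≤ (ENNReal.ofReal x)⁻¹ := by
  rw [ENNReal.one_le_inv]
  exact ENNReal.ofReal_le_one.2 h

theorem rcp_conj_aux (a b : ℝ≥0∞) (h : a⁻¹ + b⁻¹ = 1) : rcp a + rcp b = 1 := by
  have ha : a⁻¹ ≠ ∞ := fun h' => by simp [h'] at h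
  have hb : b⁻¹ ≠ ∞ := fun h' => by simp [h'] at h
  unfold rcp
  rw [← ENNReal.toReal_add ha hb, h]
  simp

theorem rcp_nonneg_aux (a : ℝ≥0∞) : 0 ≤ rcp a := ENNReal.toReal_nonneg

theorem RN_affine_aux (N : ℕ) (hN : 2 ≤ N) (p r : Fin (N + 1) → ℝ≥0∞) (θ : ℝ)
    (h : ∀ j, rcp (p j) = (1 - θ) * rcp (r j) + θ / 2) :
    RN N p = (1 - θ) * RN N r + θ / 2 := by
  have hN' : (2 : ℝ) ≤ N := by exact_mod_cast hN
  have h1 : (N : ℝ) - 1 ≠ 0 := by linarith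
  unfold RN
  rw [Finset.sum_congr rfl (fun j _ => h j), Finset.sum_add_distrib, ← Finset.mul_sum]
  simp only [Finset.sum_const, Finset.card_univ, Fintype.card_fin, nsmul_eq_mul]
  push_cast
  field_simp
  ring

/-- Remark: the interpolation-type conditions on `(p,q)` hold if and only if
`(p,q)` is a complex interpolation of a Hölder–Young tuple `(r,s)` with the
tuple `(2,…,2)`. -/
theorem interpolation_conditions_iff_exists_interpolation_parameters
    (N : ℕ) (hN : 2 ≤ N)
    (p q pc qc : Fin (N + 1) → ℝ≥0∞)
    (hp : ∀ j, 1 ≤ p j) (hq : ∀ j, 1 ≤ q j)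
    (hpc : ∀ j, (p j)⁻¹ + (pc j)⁻¹ = 1) (hqc : ∀ j, (q j)⁻¹ + (qc j)⁻¹ = 1) :
    (∀ j, max (RN N qc) 0 ≤
      min (rcp (p j)) (min (rcp (pc j)) (min (rcp (q j)) (min (rcp (qc j)) (RN N p))))) ↔
    ∃ (θ : ℝ) (r s sc : Fin (N + 1) → ℝ≥0∞),
      θ ∈ Set.Icc (0 : ℝ) 1 ∧
      (∀ j, 1 ≤ r j) ∧ (∀ j, 1 ≤ s j) ∧
      (∀ j, (s j)⁻¹ + (sc j)⁻¹ = 1) ∧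
      RN N sc ≤ 0 ∧ 0 ≤ RN N r ∧
      (∀ j, rcp (p j) = (1 - θ) * rcp (r j) + θ / 2) ∧
      (∀ j, rcp (q j) = (1 - θ) * rcp (s j) + θ / 2) := by
  constructor
  · intro h
    obtain ⟨M, hM⟩ : ∃ M, M = max (RN N qc) 0 := ⟨_, rfl⟩
    rw [← hM] at h
    simp only [le_min_iff] at h
    have hM0 : 0 ≤ M := hM ▸ le_max_right _ _
    have hMq : RN N qc ≤ M := hM ▸ le_max_left _ _
    have cp := fun j => rcp_conj_aux _ _ (hpc j)
    have cq := fun j => rcp_conj_aux _ _ (hqc j)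
    have hM1 : M ≤ 1 / 2 := by
      have := h 0
      have := cp 0
      linarith
    rcases eq_or_lt_of_le hM1 with hE | hlt
    · refine ⟨1, fun _ => 1, fun _ => 1, fun _ => ⊤, by simp, by simp, by simp, by simp,
        ?_, ?_, ?_, ?_⟩
      · have hN' : (2 : ℝ) ≤ N := by exact_mod_cast hN
        unfold RN
        apply div_nonpos_of_nonpos_of_nonneg
        · simp [rcp]
        · linarith
      · have hN' : (2 : ℝ) ≤ N := by exact_mod_cast hN
        unfold RN
        apply div_nonneg
        · simp [rcp]
        · linarith
      · intro j
        have := h j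
        have := cp j
        linarith
      · intro j
        have := h j
        have := cq j
        linarith
    · have hd : 0 < 1 - 2 * M := by linarith
      have key : ∀ x y : ℝ, x + y = 1 → M ≤ x → M ≤ y →
          0 ≤ (x - M) / (1 - 2 * M) ∧ (x - M) / (1 - 2 * M) ≤ 1 ∧
          x = (1 - 2 * M) * ((x - M) / (1 - 2 * M)) + 2 * M / 2 := by
        intro x y hxy hx hy
        refine ⟨div_nonneg (by linarith) hd.le, (div_le_one hd).2 (by linarith), ?_⟩
        field_simp
        ring
      have kp := fun j => key _ _ (cp j) (h j).1 (h j).2.1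
      have kq := fun j => key _ _ (cq j) (h j).2.2.1 (h j).2.2.2.1
      have kc := fun j => key _ _ ((add_comm _ _).trans (cq j)) (h j).2.2.2.1 (h j).2.2.1
      have er : ∀ j, rcp (p j) = (1 - 2 * M) *
          rcp (ENNReal.ofReal ((rcp (p j) - M) / (1 - 2 * M)))⁻¹ + 2 * M / 2 := by
        intro j
        rw [rcp_inv_ofReal_aux _ (kp j).1]
        exact (kp j).2.2
      have es : ∀ j, rcp (q j) = (1 - 2 * M) *
          rcp (ENNReal.ofReal ((rcp (q j) - M) / (1 - 2 * M)))⁻¹ + 2 * M / 2 := by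
        intro j
        rw [rcp_inv_ofReal_aux _ (kq j).1]
        exact (kq j).2.2
      have ec : ∀ j, rcp (qc j) = (1 - 2 * M) *
          rcp (ENNReal.ofReal ((rcp (qc j) - M) / (1 - 2 * M)))⁻¹ + 2 * M / 2 := by
        intro j
        rw [rcp_inv_ofReal_aux _ (kc j).1]
        exact (kc j).2.2
      refine ⟨2 * M, fun j => (ENNReal.ofReal ((rcp (p j) - M) / (1 - 2 * M)))⁻¹,
        fun j => (ENNReal.ofReal ((rcp (q j) - M) / (1 - 2 * M)))⁻¹,
        fun j => (ENNReal.ofReal ((rcp (qc j) - M) / (1 - 2 * M)))⁻¹,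
        ⟨by linarith, by linarith⟩, fun j => one_le_inv_ofReal_aux _ (kp j).2.1,
        fun j => one_le_inv_ofReal_aux _ (kq j).2.1, ?_, ?_, ?_, er, es⟩
      · intro j
        rw [inv_inv, inv_inv, ← ENNReal.ofReal_add (kq j).1 (kc j).1, ← add_div,
          show rcp (q j) - M + (rcp (qc j) - M) = 1 - 2 * M by linarith [cq j],
          div_self hd.ne', ENNReal.ofReal_one]
      · have := RN_affine_aux N hN _ _ _ ec
        by_contra hc
        have := mul_pos hd (not_le.1 hc)
        linarith
      · have := RN_affine_aux N hN _ _ _ er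
        have := (h 0).2.2.2.2
        by_contra hc
        have := mul_neg_of_pos_of_neg hd (not_le.1 hc)
        linarith
  · rintro ⟨θ, r, s, sc, ⟨h0, h1⟩, hr, hs, hsc, hRs, hRr, er, es⟩ j
    have hd : 0 ≤ 1 - θ := by linarith
    have le1 : ∀ a : ℝ≥0∞, 1 ≤ a → rcp a ≤ 1 := by
      intro a ha
      have := ENNReal.toReal_mono ENNReal.one_ne_top (ENNReal.inv_le_one.2 ha)
      simpa [rcp] using this
    have ec : ∀ j, rcp (qc j) = (1 - θ) * rcp (sc j) + θ / 2 := by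
      intro j
      have h2 := rcp_conj_aux _ _ (hqc j)
      have h3 := rcp_conj_aux _ _ (hsc j)
      rw [es j] at h2
      rw [show rcp (sc j) = 1 - rcp (s j) by linarith]
      linarith
    have Rp := RN_affine_aux N hN _ _ _ er
    have Rq := RN_affine_aux N hN _ _ _ ec
    have a1 := mul_nonneg hd hRr
    have a2 := mul_nonpos_of_nonneg_of_nonpos hd hRs
    have b1 := mul_nonneg hd (rcp_nonneg_aux (r j))
    have b2 := mul_nonneg hd (rcp_nonneg_aux (s j))
    have b3 := mul_nonneg hd (rcp_nonneg_aux (sc j))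
    have b4 := mul_nonneg hd (sub_nonneg.2 (le1 _ (hr j)))
    have c1 := rcp_conj_aux _ _ (hpc j)
    have e1 := er j
    have e2 := es j
    have e3 := ec j
    refine le_trans (max_le (show RN N qc ≤ θ / 2 by linarith) (by linarith)) ?_
    simp only [le_min_iff]
    refine ⟨?_, ?_, ?_, ?_, ?_⟩ <;> linarith

end
end
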